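/- arXiv:2110.00515 — 2 statements merged into one kernel-verified Lean document; each statement's English description precedes it below -/
import Mathlib

section
/- For every elliptic curve E defined over the field ℚ of rational numbers, the abelian group E(ℚ) of rational points of E is finitely generated (Mordell's theorem). -/
namespace MordellAux
open WeierstrassCurve WeierstrassCurve.Affine Height

section height
variable {K : Type*} [Field K] [DecidableEq K]

lemma addSub_self (W : WeierstrassCurve K) [W.IsElliptic] (P : W.toAffine.Point) :
    ∃ c : K, c ≠ 0 ∧ (fun i ↦ (addSubMap W i).eval (P.sym2x P)) = c • (P + P).sym2x (P - P) := by
  match P with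
  | 0 =>
    refine ⟨1, one_ne_zero, ?_⟩
    ext i
    fin_cases i <;> simp [addSubMap]
  | .some x y h =>
    have hne := addSubMap_ne_zero W (Point.sym2x_ne_zero (.some x y h) (.some x y h))
    have heq := (Affine.equation_iff ..).mp h.1
    by_cases hy : y = W.toAffine.negY x y
    · rw [Point.add_self_of_Y_eq hy]
      have h1 : (addSubMap W 1).eval (Point.sym2x (.some x y h) (.some x y h)) = 0 := by
        simp only [negY] at hy
        have hy' : 2 * y + W.a₁ * x + W.a₃ = 0 := by linear_combination hy
        simp [addSubMap, b₂, b₄, b₆]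
        linear_combination (-4) * heq + (2 * y + W.a₁ * x + W.a₃) * hy'
      have h2 : (addSubMap W 2).eval (Point.sym2x (.some x y h) (.some x y h)) = 0 := by
        simp [addSubMap]; ring
      refine ⟨(addSubMap W 0).eval (Point.sym2x (.some x y h) (.some x y h)), ?_, ?_⟩
      · intro h0
        apply hne
        ext i
        fin_cases i
        · exact h0
        · exact h1
        · exact h2
      · ext i
        fin_cases i
        · simp
        · simpa using h1
        · simpa using h2
    · rw [Point.add_self_of_Y_ne hy, sub_self, Point.sym2x_some_zero]
      have hy' : 2 * y + W.a₁ * x + W.a₃ ≠ 0 := by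
        intro h0; apply hy; simp only [negY]; linear_combination h0
      refine ⟨(2 * y + W.a₁ * x + W.a₃) ^ 2, pow_ne_zero _ hy', ?_⟩
      have hsl := slope_of_Y_ne (W := W.toAffine) (x₁ := x) rfl hy
      have hd : y - W.toAffine.negY x y = 2 * y + W.a₁ * x + W.a₃ := by simp only [negY]; ring
      rw [hd, eq_div_iff hy'] at hsl
      ext i
      fin_cases i
      · simp [addSubMap, b₄, b₆, b₈, addX]
        generalize W.toAffine.slope x x y y = l at *
        linear_combination -(l * (2 * y + W.a₁ * x + W.a₃) +
          (3 * x ^ 2 + 2 * W.a₂ * x + W.a₄ - W.a₁ * y) + W.a₁ * (2 * y + W.a₁ * x + W.a₃)) * hsl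
          + (W.a₁ ^ 2 + 4 * W.a₂ + 8 * x) * heq
      · simp [addSubMap, b₂, b₄, b₆]
        linear_combination (-4) * heq
      · simp [addSubMap]; ring

lemma addSub (W : WeierstrassCurve K) [W.IsElliptic] (P Q : W.toAffine.Point) :
    ∃ c : K, c ≠ 0 ∧ (fun i ↦ (addSubMap W i).eval (P.sym2x Q)) = c • (P + Q).sym2x (P - Q) := by
  match P, Q with
  | 0, Q =>
    rw [zero_add, zero_sub, Point.sym2x_neg_right]
    match Q with
    | 0 => simpa using addSub_self W 0
    | .some x y h =>
      refine ⟨1, one_ne_zero, ?_⟩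
      ext i
      fin_cases i <;> simp [addSubMap] <;> ring
  | .some x y h, 0 =>
    rw [add_zero, sub_zero]
    refine ⟨1, one_ne_zero, ?_⟩
    ext i
    fin_cases i <;> simp [addSubMap] <;> ring
  | .some x₁ y₁ h₁, .some x₂ y₂ h₂ =>
    by_cases hx : x₁ = x₂
    · rcases Point.X_eq_iff (h₁ := h₁) (h₂ := h₂) |>.mp hx with h | h
      · rw [h]; exact addSub_self W _
      · rw [h, Point.sym2x_neg_left, ← sub_eq_neg_add, ← neg_add', Point.sym2x_neg_right,
          Point.sym2x_comm (_ - _)]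
        exact addSub_self W _
    · have hx' : x₁ - x₂ ≠ 0 := sub_ne_zero.mpr hx
      refine ⟨(x₁ - x₂) ^ 2, pow_ne_zero _ hx', ?_⟩
      have e₁ := (Affine.equation_iff ..).mp h₁.1
      have e₂ := (Affine.equation_iff ..).mp h₂.1
      rw [sub_eq_add_neg (Point.some x₁ y₁ h₁), Point.neg_some, Point.add_of_X_ne hx,
        Point.add_of_X_ne hx, Point.sym2x_some_some, Point.sym2x_some_some]
      have hl₁ : W.toAffine.slope x₁ x₂ y₁ y₂ * (x₁ - x₂) = y₁ - y₂ := by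
        rw [slope_of_X_ne hx, div_mul_cancel₀ _ hx']
      have hl₂ : W.toAffine.slope x₁ x₂ y₁ (W.toAffine.negY x₂ y₂) * (x₁ - x₂) =
          y₁ + y₂ + W.a₁ * x₂ + W.a₃ := by
        rw [slope_of_X_ne hx, div_mul_cancel₀ _ hx', negY]; simp only [toAffine]; ring
      simp only [addX]
      generalize W.toAffine.slope x₁ x₂ y₁ y₂ = l₁ at *
      generalize W.toAffine.slope x₁ x₂ y₁ (W.toAffine.negY x₂ y₂) = l₂ at *
      simp only [toAffine] at e₁ e₂
      have hp : l₁ * l₂ * (x₁ - x₂) =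
          x₁ ^ 2 + x₁ * x₂ + x₂ ^ 2 + W.a₂ * (x₁ + x₂) + W.a₄ - W.a₁ * y₁ := by
        apply mul_right_cancel₀ hx'
        linear_combination l₂ * (x₁ - x₂) * hl₁ + (y₁ - y₂) * hl₂ + e₁ - e₂
      ext i
      fin_cases i
      · simp [addSubMap, b₄, b₆, b₈]
        linear_combination -(l₁ * l₂ * (x₁ - x₂) +
          (x₁ ^ 2 + x₁ * x₂ + x₂ ^ 2 + W.a₂ * (x₁ + x₂) + W.a₄ - W.a₁ * y₁)
          + W.a₁ * (x₁ - x₂) * (l₁ + l₂) + W.a₁ ^ 2 * (x₁ - x₂)) * hp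
          - W.a₁ * (x₁ ^ 2 + x₁ * x₂ + x₂ ^ 2 + W.a₂ * (x₁ + x₂) + W.a₄ - W.a₁ * y₁) * (hl₁ + hl₂)
          + (W.a₂ + x₁ + x₂) * (l₁ * (x₁ - x₂) + (y₁ - y₂)) * hl₁
          + (W.a₂ + x₁ + x₂) * (l₂ * (x₁ - x₂) + (y₁ + y₂ + W.a₁ * x₂ + W.a₃)) * hl₂
          + (W.a₂ + x₁ + x₂) * W.a₁ * (x₁ - x₂) * (hl₁ + hl₂)
          + (W.a₁ ^ 2 + 2 * (W.a₂ + x₁ + x₂)) * e₁ + 2 * (W.a₂ + x₁ + x₂) * e₂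
      · simp [addSubMap, b₂, b₄, b₆]
        linear_combination - (l₁ * (x₁ - x₂) + (y₁ - y₂)) * hl₁
          - (l₂ * (x₁ - x₂) + (y₁ + y₂ + W.a₁ * x₂ + W.a₃)) * hl₂
          - W.a₁ * (x₁ - x₂) * (hl₁ + hl₂) - 2 * e₁ - 2 * e₂
      · simp [addSubMap]; ring

lemma parallelogram (W : WeierstrassCurve K) [W.IsElliptic] [AdmissibleAbsValues K] :
    ∃ C : ℝ, ∀ P Q : W.toAffine.Point,
      |logHeight (P + Q).xRep + logHeight (P - Q).xRep
        - 2 * (logHeight P.xRep + logHeight Q.xRep)| ≤ C := by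
  obtain ⟨C₁, h₁⟩ := abs_logHeight_sym2_sub_le K
  obtain ⟨C₂, h₂⟩ := abs_logHeight_addSubMap_sub_two_mul_logHeight_le W
  have key (P Q : W.toAffine.Point) :
      |logHeight (P.sym2x Q) - (logHeight P.xRep + logHeight Q.xRep)| ≤ C₁ := by
    have e (P : W.toAffine.Point) : P.xRep = ![P.xRep 0, P.xRep 1] := by
      ext i; fin_cases i <;> rfl
    have := @h₁ (P.xRep 0) (P.xRep 1) (Q.xRep 0) (Q.xRep 1)
      (by rw [← e]; exact P.xRep_ne_zero) (by rw [← e]; exact Q.xRep_ne_zero)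
    rwa [← e, ← e] at this
  refine ⟨3 * C₁ + C₂, fun P Q ↦ ?_⟩
  obtain ⟨c, hc, h⟩ := addSub W P Q
  have h3 := h₂ (P.sym2x Q)
  rw [h, logHeight_smul_eq_logHeight _ hc] at h3
  have h4 := key P Q
  have h5 := key (P + Q) (P - Q)
  rw [abs_le] at *
  constructor <;> linarith

lemma northcott_xRep (W : WeierstrassCurve K) [AdmissibleAbsValues K]
    [Northcott (logHeight₁ (K := K))] :
    Northcott (fun P : W.toAffine.Point ↦ logHeight P.xRep) where
  finite_le B := by
    have hfin : (insert ![1, 0] ((fun x : K ↦ ![x, 1]) '' {x | logHeight₁ x ≤ B})).Finite :=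
      ((Northcott.finite_le B).image _).insert _
    refine Set.Finite.of_finite_fibers (fun P ↦ P.xRep) (hfin.subset ?_) ?_
    · rintro _ ⟨P, hP, rfl⟩
      match P with
      | 0 => left; simp
      | .some x y h =>
        right
        refine ⟨x, ?_, by simp⟩
        simpa [logHeight₁_eq_logHeight] using hP
    · rintro _ ⟨P, hP, rfl⟩
      refine (Set.toFinite {P, -P}).subset ?_
      rintro Q ⟨_, hQ⟩
      exact Point.eq_or_eq_neg_of_xRep_eq_xRep hQ

lemma fg_of_weak (W : WeierstrassCurve K) [W.IsElliptic] [AdmissibleAbsValues K]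
    [Northcott (logHeight₁ (K := K))]
    (H : (nsmulAddMonoidHom (α := W.toAffine.Point) 2).range.FiniteIndex) :
    AddGroup.FG W.toAffine.Point := by
  obtain ⟨C, hC⟩ := parallelogram W
  have := northcott_xRep W
  exact AddCommGroup.fg_of_descent' (h := fun P : W.toAffine.Point ↦ logHeight P.xRep) (C := C) H
    (fun _ ↦ logHeight_nonneg _) hC
end height
end MordellAux


namespace MordellAux
open WeierstrassCurve WeierstrassCurve.Affine Height

section weak
variable {K : Type*} [Field K] [DecidableEq K] [CharZero K]

/-- The 2-division polynomial of `W` is `4 (X - e₁) (X - e₂) (X - e₃)`. -/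
structure Split (W : WeierstrassCurve K) (e : Fin 3 → K) : Prop where
  b₂ : W.b₂ = -4 * (e 0 + e 1 + e 2)
  b₄ : W.b₄ = 2 * (e 0 * e 1 + e 0 * e 2 + e 1 * e 2)
  b₆ : W.b₆ = -4 * (e 0 * e 1 * e 2)

lemma Split.sq {W : WeierstrassCurve K} {e : Fin 3 → K} (hs : Split W e) {x y : K}
    (h : W.toAffine.Equation x y) :
    ((2 * y + W.a₁ * x + W.a₃) / 2) ^ 2 = (x - e 0) * (x - e 1) * (x - e 2) := by
  obtain ⟨h2, h4, h6⟩ := hs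
  rw [WeierstrassCurve.b₂] at h2
  rw [WeierstrassCurve.b₄] at h4
  rw [WeierstrassCurve.b₆] at h6
  have := (Affine.equation_iff ..).mp h
  linear_combination this + x ^ 2 * h2 / 4 + x * h4 / 2 + h6 / 4

lemma Split.ne {W : WeierstrassCurve K} [W.IsElliptic] {e : Fin 3 → K} (hs : Split W e) :
    e 0 ≠ e 1 ∧ e 0 ≠ e 2 ∧ e 1 ≠ e 2 := by
  have hΔ : W.Δ ≠ 0 := W.isUnit_Δ.ne_zero
  have h : W.Δ = 16 * ((e 0 - e 1) * (e 0 - e 2) * (e 1 - e 2)) ^ 2 := by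
    have h8 := W.b_relation
    rw [hs.b₂, hs.b₄, hs.b₆] at h8
    rw [WeierstrassCurve.Δ, hs.b₂, hs.b₄, hs.b₆]
    linear_combination -4 * (e 0 + e 1 + e 2) ^ 2 * h8
  refine ⟨?_, ?_, ?_⟩ <;> (intro h'; apply hΔ; rw [h, h']; ring)

lemma halve_aux {W : WeierstrassCurve K} [W.IsElliptic] {e : Fin 3 → K} (hs : Split W e) {x y : K}
    (h : W.toAffine.Nonsingular x y) {r₀ r₁ r₂ : K} (h₀ : x - e 0 = r₀ ^ 2) (h₁ : x - e 1 = r₁ ^ 2)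
    (h₂ : x - e 2 = r₂ ^ 2) (hy : (2 * y + W.a₁ * x + W.a₃) / 2 = r₀ * r₁ * r₂) :
    ∃ S : W.toAffine.Point, S + S = .some x y h := by
  obtain ⟨n1, n2, n3⟩ := hs.ne
  obtain ⟨h2, h4, h6⟩ := hs
  rw [WeierstrassCurve.b₂] at h2
  rw [WeierstrassCurve.b₄] at h4
  rw [WeierstrassCurve.b₆] at h6
  have E0 : e 0 = x - r₀ ^ 2 := by linear_combination -h₀
  have E1 : e 1 = x - r₁ ^ 2 := by linear_combination -h₁
  have E2 : e 2 = x - r₂ ^ 2 := by linear_combination -h₂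
  have m1 : r₀ + r₁ ≠ 0 := by
    intro h; apply n1; rw [E0, E1]; linear_combination -(r₀ - r₁) * h
  have m2 : r₀ + r₂ ≠ 0 := by
    intro h; apply n2; rw [E0, E2]; linear_combination -(r₀ - r₂) * h
  have m3 : r₁ + r₂ ≠ 0 := by
    intro h; apply n3; rw [E1, E2]; linear_combination -(r₁ - r₂) * h
  rw [E0, E1, E2] at h2 h4 h6
  have A2 : W.a₂ = -(3 * x - r₀ ^ 2 - r₁ ^ 2 - r₂ ^ 2) - W.a₁ ^ 2 / 4 := by
    linear_combination h2 / 4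
  have A4 : W.a₄ = (x - r₀ ^ 2) * (x - r₁ ^ 2) + (x - r₀ ^ 2) * (x - r₂ ^ 2)
      + (x - r₁ ^ 2) * (x - r₂ ^ 2) - W.a₁ * W.a₃ / 2 := by
    linear_combination h4 / 2
  have A6 : W.a₆ = -((x - r₀ ^ 2) * (x - r₁ ^ 2) * (x - r₂ ^ 2)) - W.a₃ ^ 2 / 4 := by
    linear_combination h6 / 4
  have Y : y = r₀ * r₁ * r₂ - (W.a₁ * x + W.a₃) / 2 := by linear_combination hy
  set X := x + r₀ * r₁ + r₀ * r₂ + r₁ * r₂ with hX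
  set Z := (r₀ + r₁) * (r₀ + r₂) * (r₁ + r₂) - (W.a₁ * X + W.a₃) / 2 with hZ
  have hE : W.toAffine.Equation X Z := by
    rw [Affine.equation_iff]
    simp only [toAffine]
    rw [A2, A4, A6, hZ, hX]
    ring
  have hN : W.toAffine.Nonsingular X Z := (Affine.equation_iff_nonsingular).mp hE
  have hd : Z - W.toAffine.negY X Z = 2 * ((r₀ + r₁) * (r₀ + r₂) * (r₁ + r₂)) := by
    simp only [negY, toAffine, hZ]; ring
  have hd0 : Z - W.toAffine.negY X Z ≠ 0 := by
    rw [hd]; exact mul_ne_zero two_ne_zero (mul_ne_zero (mul_ne_zero m1 m2) m3)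
  have hne : Z ≠ W.toAffine.negY X Z := sub_ne_zero.mp hd0
  have hsl : W.toAffine.slope X X Z Z = r₀ + r₁ + r₂ - W.a₁ / 2 := by
    rw [slope_of_Y_ne rfl hne, div_eq_iff hd0, hd]
    simp only [toAffine]
    rw [A2, A4, hZ, hX]
    ring
  refine ⟨.some X Z hN, ?_⟩
  rw [Point.add_self_of_Y_ne hne]
  have x' : W.toAffine.addX X X (W.toAffine.slope X X Z Z) = x := by
    rw [hsl, addX]
    simp only [toAffine]
    rw [A2, hX]; ring
  have y' : W.toAffine.addY X X Z (W.toAffine.slope X X Z Z) = y := by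
    rw [addY, negAddY, x', hsl, negY]
    simp only [toAffine]
    rw [Y, hZ, hX]; ring
  simp only [x', y']

lemma halve {W : WeierstrassCurve K} [W.IsElliptic] {e : Fin 3 → K} (hs : Split W e) {x y : K}
    (h : W.toAffine.Nonsingular x y) (hsq : ∀ i, IsSquare (x - e i)) :
    ∃ S : W.toAffine.Point, S + S = .some x y h := by
  obtain ⟨r₀, h₀⟩ := hsq 0
  obtain ⟨r₁, h₁⟩ := hsq 1
  obtain ⟨r₂, h₂⟩ := hsq 2
  have := hs.sq h.1
  rw [h₀, h₁, h₂, show r₀ * r₀ * (r₁ * r₁) * (r₂ * r₂) = (r₀ * r₁ * r₂) ^ 2 by ring,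
    sq_eq_sq_iff_eq_or_eq_neg] at this
  rcases this with hy | hy
  · exact halve_aux hs h (by rw [h₀, sq]) (by rw [h₁, sq]) (by rw [h₂, sq]) hy
  · exact halve_aux hs h (r₀ := -r₀) (by rw [h₀]; ring) (by rw [h₁, sq]) (by rw [h₂, sq])
      (by rw [hy]; ring)

lemma pair {W : WeierstrassCurve K} [W.IsElliptic] {e : Fin 3 → K} (hs : Split W e)
    {x₁ y₁ x₂ y₂ : K} (h₁ : W.toAffine.Nonsingular x₁ y₁) (h₂ : W.toAffine.Nonsingular x₂ y₂)
    (n₁ : ∀ i, x₁ - e i ≠ 0) (n₂ : ∀ i, x₂ - e i ≠ 0)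
    (hsq : ∀ i, IsSquare ((x₁ - e i) * (x₂ - e i))) :
    ∃ S : W.toAffine.Point, S + S = .some x₁ y₁ h₁ + .some x₂ y₂ h₂ := by
  by_cases hx : x₁ = x₂
  · rcases Point.X_eq_iff (h₁ := h₁) (h₂ := h₂) |>.mp hx with h | h
    · exact ⟨_, by rw [h]⟩
    · exact ⟨0, by rw [h]; simp⟩
  · rw [Point.add_of_X_ne hx]
    apply halve hs
    intro i
    have hp := addPolynomial_slope h₁.1 h₂.1 (fun h ↦ hx h.1)
    have hp' := congrArg (Polynomial.eval (e i)) hp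
    rw [addPolynomial_eq] at hp'
    generalize W.toAffine.slope x₁ x₂ y₁ y₂ = l at *
    generalize W.toAffine.addX x₁ x₂ l = x₃ at *
    simp [Cubic.toPoly] at hp'
    have hc : 4 * e i ^ 3 + W.b₂ * e i ^ 2 + 2 * W.b₄ * e i + W.b₆ = 0 := by
      rw [hs.b₂, hs.b₄, hs.b₆]
      fin_cases i <;> simp <;> ring
    rw [WeierstrassCurve.b₂, WeierstrassCurve.b₄, WeierstrassCurve.b₆] at hc
    have key : (x₁ - e i) * (x₂ - e i) * (x₃ - e i) =
        ((2 * (l * (e i - x₁) + y₁) + W.a₁ * e i + W.a₃) / 2) ^ 2 := by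
      linear_combination -hp' - hc / 4
    obtain ⟨s, h⟩ := hsq i
    have hs0 : s ≠ 0 := by
      rintro rfl; exact mul_ne_zero (n₁ i) (n₂ i) (by simpa using h)
    refine ⟨((2 * (l * (e i - x₁) + y₁) + W.a₁ * e i + W.a₃) / 2) / s, ?_⟩
    rw [h] at key
    field_simp
    linear_combination 4 * key

lemma weak_of_finite {W : WeierstrassCurve K} [W.IsElliptic] {e : Fin 3 → K} (hs : Split W e)
    (F : Set K) (hF : F.Finite) (hF0 : ∀ f ∈ F, f ≠ 0)
    (H : ∀ x y : K, W.toAffine.Equation x y → (∀ i, x - e i ≠ 0) →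
      ∀ i, ∃ f ∈ F, IsSquare ((x - e i) * f)) :
    (nsmulAddMonoidHom (α := W.toAffine.Point) 2).range.FiniteIndex := by
  set R := (nsmulAddMonoidHom (α := W.toAffine.Point) 2).range with hR
  let q : W.toAffine.Point → W.toAffine.Point ⧸ R := QuotientAddGroup.mk
  let bad : Set W.toAffine.Point := {P | P = 0 ∨ ∃ i, P.xRep = ![e i, 1]}
  let good (t : Fin 3 → K) : Set W.toAffine.Point :=
    {P | ∃ x y h, P = .some x y h ∧ (∀ i, x - e i ≠ 0) ∧ ∀ i, IsSquare ((x - e i) * t i)}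
  have hbad : bad.Finite := by
    have hfin : (insert ![1, 0] (Set.range (fun i ↦ ![e i, 1]))).Finite :=
      (Set.finite_range _).insert _
    refine Set.Finite.of_finite_fibers (fun P ↦ P.xRep) (hfin.subset ?_) ?_
    · rintro _ ⟨P, rfl | ⟨i, hi⟩, rfl⟩
      · left; simp
      · right; exact ⟨i, hi.symm⟩
    · rintro _ ⟨P, hP, rfl⟩
      refine (Set.toFinite {P, -P}).subset ?_
      rintro Q ⟨_, hQ⟩
      exact Point.eq_or_eq_neg_of_xRep_eq_xRep hQ
  have hT : (Set.univ.pi (fun _ : Fin 3 ↦ F)).Finite := Set.Finite.pi' (fun _ ↦ hF) |>.subset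
    (fun t ht i ↦ ht i (Set.mem_univ i))
  have hgood (t : Fin 3 → K) (ht : t ∈ Set.univ.pi (fun _ : Fin 3 ↦ F)) :
      (q '' good t).Finite := by
    apply Set.Subsingleton.finite
    rintro _ ⟨_, ⟨x₁, y₁, h₁, rfl, n₁, s₁⟩, rfl⟩ _ ⟨_, ⟨x₂, y₂, h₂, rfl, n₂, s₂⟩, rfl⟩
    obtain ⟨S, hS⟩ := pair hs h₁ h₂ n₁ n₂ (fun i ↦ by
      obtain ⟨a, ha⟩ := s₁ i
      obtain ⟨b, hb⟩ := s₂ i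
      have := hF0 _ (ht i (Set.mem_univ i))
      refine ⟨a * b / t i, ?_⟩
      field_simp
      linear_combination (x₂ - e i) * t i * ha + a * a * hb)
    refine QuotientAddGroup.eq.mpr ⟨S - .some x₁ y₁ h₁, ?_⟩
    simp only [nsmulAddMonoidHom_apply, smul_sub, two_nsmul, hS]
    abel
  have hcov : (Set.univ : Set (W.toAffine.Point ⧸ R)) ⊆
      q '' bad ∪ ⋃ t ∈ Set.univ.pi (fun _ : Fin 3 ↦ F), q '' good t := by
    intro z _
    obtain ⟨P, rfl⟩ := QuotientAddGroup.mk_surjective z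
    by_cases hP : P ∈ bad
    · exact .inl ⟨P, hP, rfl⟩
    · right
      match P with
      | 0 => exact absurd (.inl rfl) hP
      | .some x y h =>
        have hn : ∀ i, x - e i ≠ 0 := by
          intro i hi
          apply hP
          exact .inr ⟨i, by simp [sub_eq_zero.mp hi]⟩
        choose t ht ht' using H x y h.1 hn
        simp only [Set.mem_iUnion]
        exact ⟨t, fun i _ ↦ ht i, _, ⟨x, y, h, rfl, hn, ht'⟩, rfl⟩
  have hfin : Finite (W.toAffine.Point ⧸ R) := by
    apply Set.finite_univ_iff.mp
    exact ((hbad.image q).union (hT.biUnion hgood)).subset hcov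
  exact AddSubgroup.finiteIndex_of_finite_quotient
end weak
end MordellAux

namespace MordellAux
section C
open IsDedekindDomain FractionalIdeal
open scoped nonZeroDivisors

variable {R K : Type*} [CommRing R] [IsDedekindDomain R] [Field K] [Algebra R K]
  [IsFractionRing R K]

lemma valuation_eq_count (v : HeightOneSpectrum R) {a : K} (ha : a ≠ 0) :
    v.valuation K a = WithZero.exp (-(count K v (spanSingleton R⁰ a))) := by
  classical
  obtain ⟨n, d, rfl⟩ := IsLocalization.exists_mk'_eq R⁰ a
  have hd : (d : R) ≠ 0 := nonZeroDivisors.coe_ne_zero d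
  have hn : n ≠ 0 := by rintro rfl; simp at ha
  rw [HeightOneSpectrum.valuation_of_mk', v.intValuation_if_neg hn, v.intValuation_if_neg hd,
    count_well_defined K v (a := d) (J := Ideal.span {n}), ← WithZero.exp_sub]
  · congr 1; ring
  · simpa [spanSingleton_eq_zero_iff] using ha
  · rw [coeIdeal_span_singleton, spanSingleton_mul_spanSingleton, IsFractionRing.mk'_eq_div]
    congr 1; ring

lemma finite_val_ne_one {a : K} (ha : a ≠ 0) :
    {v : HeightOneSpectrum R | v.valuation K a ≠ 1}.Finite := by
  refine (finite_factors (spanSingleton R⁰ a)).subset ?_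
  intro v hv h
  apply hv
  rw [valuation_eq_count v ha, h]; simp

/-- `A` is covered by finitely many translates of `B`. -/
def Cov {G : Type*} [Group G] (A B : Set G) : Prop :=
  ∃ F : Set G, F.Finite ∧ ∀ a ∈ A, ∃ f ∈ F, a / f ∈ B

lemma Cov.trans {G : Type*} [CommGroup G] {A B C : Set G} (h : Cov A B) (h' : Cov B C) :
    Cov A C := by
  obtain ⟨F, hF, H⟩ := h
  obtain ⟨F', hF', H'⟩ := h'
  refine ⟨Set.image2 (· * ·) F F', hF.image2 _ hF', fun a ha ↦ ?_⟩
  obtain ⟨f, hf, h1⟩ := H a ha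
  obtain ⟨f', hf', h2⟩ := H' _ h1
  exact ⟨f * f', ⟨f, hf, f', hf', rfl⟩, by rwa [← div_div]⟩

lemma Cov.of_map {G T : Type*} [CommGroup G] [Finite T] {A B : Set G} (φ : A → T)
    (h : ∀ a b : A, φ a = φ b → (a : G) / b ∈ B) : Cov A B := by
  refine ⟨Set.range (fun t : Set.range φ ↦ ((t.2.choose : A) : G)), Set.finite_range _, ?_⟩
  intro a ha
  refine ⟨_, ⟨⟨φ ⟨a, ha⟩, ⟨_, rfl⟩⟩, rfl⟩, ?_⟩
  apply h ⟨a, ha⟩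
  exact (Set.mem_range_self (f := φ) ⟨a, ha⟩).choose_spec.symm

lemma cov1 (S : Set (HeightOneSpectrum R)) (hS : S.Finite) :
    Cov {a : Kˣ | ∀ v ∉ S, Even (count K v (spanSingleton R⁰ (a : K)))}
      {a : Kˣ | ∀ v : HeightOneSpectrum R, Even (count K v (spanSingleton R⁰ (a : K)))} := by
  classical
  have := hS.to_subtype
  refine Cov.of_map (T := S → Prop)
    (fun a v ↦ Even (count K v.1 (spanSingleton R⁰ ((a : Kˣ) : K)))) ?_
  rintro ⟨a, ha⟩ ⟨b, hb⟩ hab v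
  have e : count K v (spanSingleton R⁰ ((a / b : Kˣ) : K)) =
      count K v (spanSingleton R⁰ (a : K)) - count K v (spanSingleton R⁰ (b : K)) := by
    rw [Units.val_div_eq_div_val, div_eq_mul_inv, ← spanSingleton_mul_spanSingleton,
      count_mul, ← spanSingleton_inv, count_inv, sub_eq_add_neg]
    · simp [spanSingleton_eq_zero_iff]
    · simp [spanSingleton_eq_zero_iff]
  simp only
  rw [e, Int.even_sub]
  by_cases hv : v ∈ S
  · exact iff_of_eq (congrFun hab ⟨v, hv⟩)
  · exact iff_of_true (ha v hv) (hb v hv)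

lemma exists_sq (a : Kˣ) (h : ∀ v : HeightOneSpectrum R,
    Even (count K v (spanSingleton R⁰ (a : K)))) :
    ∃ J : (FractionalIdeal R⁰ K)ˣ, toPrincipalIdeal R K a = J ^ 2 := by
  have ha : spanSingleton R⁰ (a : K) ≠ 0 := by simp [spanSingleton_eq_zero_iff]
  choose c hc using h
  have hfin : (Function.HasFiniteMulSupport fun v : HeightOneSpectrum R ↦
      (v.asIdeal : FractionalIdeal R⁰ K) ^ c v) := by
    refine (finite_factors (spanSingleton R⁰ (a : K))).subset ?_
    intro v hv h
    apply hv
    have : c v = 0 := by have := hc v; rw [h] at this; omega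
    simp [this]
  have := finprod_heightOneSpectrum_factorization' K ha
  have hz (v : HeightOneSpectrum R) : (v.asIdeal : FractionalIdeal R⁰ K) ^ (c v + c v) =
      (v.asIdeal : FractionalIdeal R⁰ K) ^ c v * (v.asIdeal : FractionalIdeal R⁰ K) ^ c v :=
    zpow_add₀ (coeIdeal_ne_zero.mpr v.ne_bot) _ _
  simp_rw [hc, hz] at this
  rw [finprod_mul_distrib hfin hfin] at this
  set J := ∏ᶠ v : HeightOneSpectrum R, (v.asIdeal : FractionalIdeal R⁰ K) ^ c v
  have hJ : J ≠ 0 := by rintro h; rw [h, zero_mul] at this; exact ha this.symm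
  refine ⟨Units.mk0 J hJ, Units.ext ?_⟩
  simp [← this, sq]

lemma cov2 [Finite (ClassGroup R)] :
    Cov {a : Kˣ | ∀ v : HeightOneSpectrum R, Even (count K v (spanSingleton R⁰ (a : K)))}
      {a : Kˣ | ∃ (u : Rˣ) (c : Kˣ), a = Units.map (algebraMap R K).toMonoidHom u * c ^ 2} := by
  choose J hJ using fun a : {a : Kˣ | ∀ v : HeightOneSpectrum R,
    Even (count K v (spanSingleton R⁰ (a : K)))} ↦ exists_sq a.1 a.2
  refine Cov.of_map (fun a ↦ ClassGroup.mk K (J a)) ?_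
  intro a b hab
  have h1 : ClassGroup.mk K (J a / J b) = 1 := by rw [map_div, hab, div_self']
  rw [← (ClassGroup.equiv K).injective.eq_iff, map_one, ClassGroup.equiv_mk,
    QuotientGroup.mk'_apply, QuotientGroup.eq_one_iff] at h1
  obtain ⟨c, hc⟩ := h1
  have h2 : toPrincipalIdeal R K (a / b) = toPrincipalIdeal R K (c ^ 2) := by
    rw [map_div, hJ, hJ, map_pow, ← div_pow]
    congr 1
    rw [hc]
    ext1
    simp
  have h3 := congrArg Units.val h2
  rw [coe_toPrincipalIdeal, coe_toPrincipalIdeal, spanSingleton_eq_spanSingleton] at h3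
  obtain ⟨z, hz⟩ := h3
  refine ⟨z⁻¹, c, ?_⟩
  ext1
  rw [Units.val_mul, ← hz]
  simp [Units.smul_def, Algebra.smul_def]

lemma cov3 [Group.FG Rˣ] :
    Cov {a : Kˣ | ∃ (u : Rˣ) (c : Kˣ), a = Units.map (algebraMap R K).toMonoidHom u * c ^ 2}
      {a : Kˣ | IsSquare a} := by
  have : (powMonoidHom (α := Rˣ) 2).range.FiniteIndex :=
    Subgroup.finiteIndex_range_powMonoidHom_of_fg _ two_ne_zero
  have : Finite (Rˣ ⧸ (powMonoidHom (α := Rˣ) 2).range) := Subgroup.finite_quotient_of_finiteIndex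
  choose u c h using fun a : {a : Kˣ | ∃ (u : Rˣ) (c : Kˣ),
    a = Units.map (algebraMap R K).toMonoidHom u * c ^ 2} ↦ a.2
  refine Cov.of_map (fun a ↦ (u a : Rˣ ⧸ (powMonoidHom (α := Rˣ) 2).range)) ?_
  intro a b hab
  obtain ⟨w, hw⟩ := QuotientGroup.eq.mp hab
  simp only [powMonoidHom_apply] at hw
  have hb : u b = u a * w ^ 2 := by rw [hw]; simp
  refine ⟨c a / c b / Units.map (algebraMap R K).toMonoidHom w, ?_⟩
  rw [h a, h b, hb, map_mul, map_pow]
  ext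
  simp
  field_simp

lemma selmer_finite [Finite (ClassGroup R)] [Group.FG Rˣ] (S : Set (HeightOneSpectrum R))
    (hS : S.Finite) : ∃ F : Set K, F.Finite ∧ (∀ f ∈ F, f ≠ 0) ∧
      ∀ a : K, a ≠ 0 → (∀ v ∉ S, IsSquare (v.valuation K a)) → ∃ f ∈ F, IsSquare (a * f) := by
  obtain ⟨F, hF, H⟩ := ((cov1 (K := K) S hS).trans cov2).trans cov3
  refine ⟨(fun u : Kˣ ↦ (u : K)) '' F, hF.image _, ?_, ?_⟩
  · rintro _ ⟨f, -, rfl⟩; exact f.ne_zero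
  · intro a ha h
    obtain ⟨f, hf, s, hs⟩ := H (Units.mk0 a ha) fun v hv ↦ by
      obtain ⟨r, hr⟩ := h v hv
      rw [valuation_eq_count v ha] at hr
      have hr0 : r ≠ 0 := by rintro rfl; simp at hr
      rw [← WithZero.exp_log hr0, ← WithZero.exp_add, WithZero.exp_inj] at hr
      exact ⟨-WithZero.log r, by simp only [Units.val_mk0]; omega⟩
    refine ⟨_, ⟨f, hf, rfl⟩, s * f, ?_⟩
    have := congrArg Units.val hs
    simp at this
    field_simp at this
    simp only
    linear_combination (f : K) * this
end C
end MordellAux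

namespace MordellAux
section final
open WeierstrassCurve WeierstrassCurve.Affine IsDedekindDomain

lemma val_square {K Γ : Type*} [Field K] [LinearOrderedCommGroupWithZero Γ] (v : Valuation K Γ)
    {e f g x w : K} (hw : w ^ 2 = (x - e) * (x - f) * (x - g)) (he : v e ≤ 1) (hf : v f ≤ 1)
    (hg : v g ≤ 1) (hef : v (e - f) = 1) (heg : v (e - g) = 1) : IsSquare (v (x - e)) := by
  have hv := congrArg v hw
  rw [map_pow, map_mul, map_mul] at hv
  rcases lt_or_ge 1 (v x) with hx | hx
  · have key {t : K} (ht : v t ≤ 1) : v (x - t) = v x :=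
      v.map_sub_eq_of_lt_left (ht.trans_lt hx)
    rw [key he, key hf, key hg] at hv
    rw [key he]
    have h0 : v x ≠ 0 := (zero_lt_one.trans hx).ne'
    refine ⟨v w / v x, ?_⟩
    rw [div_mul_div_comm, ← sq, hv, eq_div_iff (mul_ne_zero h0 h0), mul_assoc]
  · rcases (v.map_sub_le hx he).lt_or_eq with h | h
    · have key {t : K} (ht : v (e - t) = 1) : v (x - t) = 1 := by
        rw [← sub_add_sub_cancel x e t, v.map_add_eq_of_lt_right (by rwa [ht]), ht]
      rw [key hef, key heg, mul_one, mul_one] at hv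
      exact ⟨v w, by rw [← hv, sq]⟩
    · exact ⟨1, by rw [h, mul_one]⟩

lemma finite_val_gt {R K : Type*} [CommRing R] [IsDedekindDomain R] [Field K] [Algebra R K]
    [IsFractionRing R K] (a : K) : {v : HeightOneSpectrum R | ¬ v.valuation K a ≤ 1}.Finite := by
  rcases eq_or_ne a 0 with rfl | ha
  · simp
  · exact (finite_val_ne_one ha).subset fun v hv h ↦ hv h.le

theorem fg_of_split {K : Type*} [Field K] [NumberField K] [DecidableEq K] (W : WeierstrassCurve K)
    [W.IsElliptic] {e : Fin 3 → K} (hs : Split W e) : AddGroup.FG W.toAffine.Point := by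
  apply fg_of_weak
  let R := NumberField.RingOfIntegers K
  let S : Set (HeightOneSpectrum R) := (⋃ i, {v | ¬ v.valuation K (e i) ≤ 1}) ∪
    ⋃ p : {p : Fin 3 × Fin 3 // p.1 ≠ p.2}, {v | v.valuation K (e p.1.1 - e p.1.2) ≠ 1}
  have hS : S.Finite := by
    refine (Set.finite_iUnion fun i ↦ finite_val_gt _).union (Set.finite_iUnion fun p ↦ ?_)
    obtain ⟨h01, h02, h12⟩ := hs.ne
    obtain ⟨⟨i, j⟩, hij⟩ := p
    refine finite_val_ne_one (sub_ne_zero.mpr ?_)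
    fin_cases i <;> fin_cases j <;> first | exact absurd rfl hij | assumption | (symm; assumption)
  have : Group.FG Rˣ := Group.fg_iff_monoid_fg.mpr inferInstance
  obtain ⟨F, hF, hF0, H⟩ := selmer_finite (K := K) S hS
  refine weak_of_finite hs F hF hF0 fun x y hxy hn i ↦ H _ (hn i) fun v hv ↦ ?_
  have h1 (i) : v.valuation K (e i) ≤ 1 := by
    by_contra h
    exact hv (Or.inl (Set.mem_iUnion.mpr ⟨i, h⟩))
  have h2 (i j) (hij : i ≠ j) : v.valuation K (e i - e j) = 1 := by
    by_contra h
    exact hv (Or.inr (Set.mem_iUnion.mpr ⟨⟨(i, j), hij⟩, h⟩))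
  have hw := hs.sq hxy
  fin_cases i
  · exact val_square _ hw (h1 _) (h1 _) (h1 _) (h2 0 1 (by decide)) (h2 0 2 (by decide))
  · exact val_square _ (hw.trans (by ring : _ = (x - e 1) * (x - e 0) * (x - e 2)))
      (h1 _) (h1 _) (h1 _) (h2 1 0 (by decide)) (h2 1 2 (by decide))
  · exact val_square _ (hw.trans (by ring : _ = (x - e 2) * (x - e 0) * (x - e 1)))
      (h1 _) (h1 _) (h1 _) (h2 2 0 (by decide)) (h2 2 1 (by decide))

lemma fg_of_inj {A B : Type*} [AddCommGroup A] [AddCommGroup B] [h : AddGroup.FG B] (f : A →+ B)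
    (hf : Function.Injective f) : AddGroup.FG A := by
  rw [← Module.Finite.iff_addGroup_fg] at h ⊢
  exact Module.Finite.of_injective f.toIntLinearMap hf

theorem fg_of_splits (E : WeierstrassCurve ℚ) [E.IsElliptic] (K : Type*) [Field K] [NumberField K]
    [Algebra ℚ K] (hsp : (E.twoTorsionPolynomial.toPoly.map (algebraMap ℚ K)).Splits) :
    AddGroup.FG E.toAffine.Point := by
  classical
  have ha : E.twoTorsionPolynomial.a ≠ 0 := four_ne_zero
  obtain ⟨x, y, z, h3⟩ := (Cubic.splits_iff_roots_eq_three ha).mp hsp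
  have hs : Split (E.map (algebraMap ℚ K)) ![x, y, z] := by
    have hb := Cubic.b_eq_three_roots ha h3
    have hc := Cubic.c_eq_three_roots ha h3
    have hd := Cubic.d_eq_three_roots ha h3
    simp only [twoTorsionPolynomial, _root_.map_ofNat, _root_.map_mul] at hb hc hd
    refine ⟨?_, ?_, ?_⟩
    · rw [map_b₂, hb]; simp; ring
    · rw [map_b₄]; simp [-eq_ratCast]; linear_combination hc / 2
    · rw [map_b₆, hd]; simp
  have hK := fg_of_split _ hs
  have hQ : AddGroup.FG (E.baseChange ℚ).toAffine.Point :=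
    fg_of_inj (h := hK) (Point.baseChange (W' := E) ℚ K) (Point.map_injective _)
  have hE : E.baseChange ℚ = E := by
    ext <;> simp [WeierstrassCurve.baseChange]
  rwa [hE] at hQ

theorem main (E : WeierstrassCurve ℚ) [E.IsElliptic] : AddGroup.FG E.toAffine.Point := by
  have h0 : CharZero E.twoTorsionPolynomial.toPoly.SplittingField :=
    charZero_of_injective_algebraMap
      (algebraMap ℚ E.twoTorsionPolynomial.toPoly.SplittingField).injective
  have hfd : FiniteDimensional ℚ E.twoTorsionPolynomial.toPoly.SplittingField := inferInstance
  have : NumberField E.twoTorsionPolynomial.toPoly.SplittingField :=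
    { to_charZero := h0
      to_finiteDimensional := by convert! hfd }
  exact fg_of_splits E E.twoTorsionPolynomial.toPoly.SplittingField
    (Polynomial.SplittingField.splits E.twoTorsionPolynomial.toPoly)
end final
end MordellAux

/-- Mordell's theorem: for every elliptic curve `E` over `ℚ`, the abelian group `E(ℚ)` of
rational points is finitely generated. -/
theorem mordell_theorem (E : WeierstrassCurve ℚ) [E.IsElliptic] :
    AddGroup.FG E.toAffine.Point := by
  exact MordellAux.main E
end

section
/- Siegel's theorem on integral points on hyperelliptic curves (Mordell's problem 2): let f be a polynomial with integer coefficients that is squarefree and of degree at least 3. Then the set of pairs of integers (x, y) with y² = f(x) is finite. -/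
section

open Finset

/-- Auxiliary product. -/
def sgE (c l : ℕ) : ℕ := ∏ m ∈ range l, (3 * m + c)

/-- Auxiliary generalized binomial coefficient. -/
def sgG (c r l : ℕ) : ℕ := (3 ^ l * ∏ m ∈ range l, (3 * (r + m) + c)) / l.factorial

/-- Coefficients of the Pade approximants. -/
def sgV (k i : ℕ) : ℕ := sgG 2 i (k - i) * sgG 4 (k - i) i

lemma sg_fact_dvd (c r l : ℕ) : l.factorial ∣ 3 ^ l * ∏ m ∈ range l, (3 * (r + m) + c) := by
  obtain ⟨e, B, hB, hl⟩ := Nat.exists_eq_pow_mul_and_not_dvd (n := l.factorial) (Nat.factorial_ne_zero l) 3 (by norm_num)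
  have hcop : Nat.Coprime 3 B := (Nat.Prime.coprime_iff_not_dvd Nat.prime_three).2 hB
  have he : e ≤ l := by
    have h1 : 3 ^ e ∣ l.factorial := ⟨B, hl⟩
    have : Fact (Nat.Prime 3) := ⟨Nat.prime_three⟩
    have h2 : e ≤ padicValNat 3 l.factorial :=
      (padicValNat_dvd_iff_le (Nat.factorial_ne_zero l)).1 h1
    have h3 := sub_one_mul_padicValNat_factorial (p := 3) l
    omega
  rw [hl]
  apply mul_dvd_mul (pow_dvd_pow 3 he)
  have hB0 : NeZero B := ⟨by rintro rfl; simp at hB⟩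
  obtain ⟨u, hu⟩ : ∃ u : ℕ, (3 : ZMod B) * (u : ZMod B) = 1 := by
    refine ⟨((3 : ZMod B)⁻¹).val, ?_⟩
    rw [ZMod.natCast_zmod_val]
    exact_mod_cast ZMod.coe_mul_inv_eq_one 3 hcop
  have hd : B ∣ 3 ^ l * (r + u * c).ascFactorial l :=
    Dvd.dvd.mul_left ((Dvd.intro_left _ hl.symm).trans (Nat.factorial_dvd_ascFactorial _ _)) _
  rw [← ZMod.natCast_eq_zero_iff] at hd ⊢
  rw [← hd, Nat.ascFactorial_eq_prod_range, ← Finset.card_range l, ← Finset.prod_const,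
    Finset.card_range, ← Finset.prod_mul_distrib]
  push_cast
  refine Finset.prod_congr rfl fun m _ => ?_
  linear_combination (-(c : ZMod B)) * hu

lemma sgE_ne (c l : ℕ) (hc : 0 < c) : (sgE c l : ℚ) ≠ 0 := by
  unfold sgE
  rw [Nat.cast_ne_zero, Finset.prod_ne_zero_iff]
  intro a _
  omega

lemma sgE_mul (c r l : ℕ) : sgE c r * ∏ m ∈ range l, (3 * (r + m) + c) = sgE c (r + l) := by
  unfold sgE
  rw [Finset.prod_range_add]

lemma sgG_cast (c r l : ℕ) (hc : 0 < c) :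
    (sgG c r l : ℚ) = 3 ^ l * sgE c (r + l) / (sgE c r * l.factorial) := by
  have h := sgE_mul c r l
  have h1 := sgE_ne c r hc
  have h2 : (l.factorial : ℚ) ≠ 0 := by exact_mod_cast Nat.factorial_ne_zero l
  unfold sgG
  rw [Nat.cast_div (sg_fact_dvd c r l) h2, ← h]
  push_cast
  field_simp

lemma sgV_cast (k i : ℕ) (hi : i ≤ k) :
    (sgV k i : ℚ) = 3 ^ k * sgE 2 k * sgE 4 k /
      (sgE 2 i * (k - i).factorial * (sgE 4 (k - i) * i.factorial)) := by
  unfold sgV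
  push_cast
  rw [sgG_cast _ _ _ (by norm_num), sgG_cast _ _ _ (by norm_num), Nat.add_sub_cancel' hi,
    Nat.sub_add_cancel hi, div_mul_div_comm]
  congr 1
  have : (3:ℚ) ^ k = 3 ^ (k - i) * 3 ^ i := by rw [← pow_add, Nat.sub_add_cancel hi]
  rw [this]; ring

lemma sgE_fact_le (r l : ℕ) (c : ℕ) (hc : c ≤ 6) :
    ∏ m ∈ range l, (3 * (r + m) + c) ≤ 3 ^ l * (r + 2).ascFactorial l := by
  rw [Nat.ascFactorial_eq_prod_range]
  conv_rhs => rw [← Finset.card_range l, ← Finset.prod_const, Finset.card_range,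
    ← Finset.prod_mul_distrib]
  refine Finset.prod_le_prod' fun m _ => ?_
  omega

lemma sgG_le (c r l : ℕ) (hc : c ≤ 6) : sgG c r l ≤ 2 * 18 ^ (r + l) := by
  unfold sgG
  apply Nat.div_le_of_le_mul
  have h1 := sgE_fact_le r l c hc
  rw [show r + 2 = (r + 1) + 1 by ring, Nat.ascFactorial_eq_factorial_mul_choose] at h1
  have h2 : (r + 1 + l).choose l ≤ 2 ^ (r + 1 + l) := Nat.choose_le_two_pow _ _
  calc 3 ^ l * ∏ m ∈ range l, (3 * (r + m) + c)
      ≤ 3 ^ l * (3 ^ l * (l.factorial * 2 ^ (r + 1 + l))) := by gcongr; exact h1.trans (by gcongr)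
    _ = l.factorial * (2 * (2 ^ r * 18 ^ l)) := by
        rw [show 18 = 3 * 3 * 2 by norm_num, mul_pow, mul_pow]; ring
    _ ≤ l.factorial * (2 * (18 ^ r * 18 ^ l)) := by gcongr; norm_num
    _ = _ := by rw [pow_add]

lemma sgV_le (k i : ℕ) (hi : i ≤ k) : sgV k i ≤ 4 * 324 ^ k := by
  unfold sgV
  have h1 := sgG_le 2 i (k-i) (by norm_num)
  have h2 := sgG_le 4 (k-i) i (by norm_num)
  rw [Nat.add_sub_cancel' hi] at h1
  rw [Nat.sub_add_cancel hi] at h2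
  calc _ ≤ (2 * 18 ^ k) * (2 * 18 ^ k) := Nat.mul_le_mul h1 h2
    _ = 4 * 324 ^ k := by rw [show 324 = 18 * 18 by norm_num, mul_pow]; ring

end

section

open Finset

lemma sg_prod_split (f : ℕ → ℚ) (i l : ℕ) :
    ∏ j ∈ range (i + l + 1), f j =
      (∏ j ∈ range i, f (i - 1 - j)) * (∏ j ∈ range l, f (i + (j + 1))) * f i := by
  rw [add_assoc, Finset.prod_range_add, Finset.prod_range_succ', Finset.prod_range_reflect,
    mul_assoc]
  simp

lemma sg_prod_split_erase (f : ℕ → ℚ) (i l : ℕ) :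
    ∏ j ∈ (range (i + l + 1)).erase i, f j =
      (∏ j ∈ range i, f (i - 1 - j)) * (∏ j ∈ range l, f (i + (j + 1))) := by
  have h := sg_prod_split (fun j => if j = i then 1 else f j) i l
  rw [← Finset.mul_prod_erase _ _ (show i ∈ range (i + l + 1) by simp)] at h
  simp only [if_true, one_mul, mul_one] at h
  rw [Finset.prod_congr rfl (g := f)] at h
  · rw [h]
    congr 1
    · refine Finset.prod_congr rfl fun j hj => ?_
      rw [if_neg]
      have := Finset.mem_range.1 hj
      omega
    · refine Finset.prod_congr rfl fun j hj => ?_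
      rw [if_neg]
      omega
  · intro x hx
    rw [if_neg (Finset.ne_of_mem_erase hx)]

lemma sg_prodA (i l : ℕ) :
    ∏ j ∈ (range (i + l + 1)).erase i, (3 * (i : ℚ) - 3 * j) =
      3 ^ (i + l) * i.factorial * (-1) ^ l * l.factorial := by
  rw [sg_prod_split_erase, pow_add]
  have h1 : ∏ j ∈ range i, (3 * (i : ℚ) - 3 * ((i - 1 - j : ℕ) : ℚ)) = 3 ^ i * i.factorial := by
    rw [← Finset.prod_range_add_one_eq_factorial]
    push_cast
    conv_rhs => rw [← Finset.card_range i, ← Finset.prod_const, Finset.card_range,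
      ← Finset.prod_mul_distrib]
    refine Finset.prod_congr rfl fun j hj => ?_
    have := Finset.mem_range.1 hj
    rw [Nat.cast_sub (by omega), Nat.cast_sub (by omega)]
    push_cast; ring
  have h2 : ∏ j ∈ range l, (3 * (i : ℚ) - 3 * ((i + (j + 1) : ℕ) : ℚ)) =
      3 ^ l * (-1) ^ l * l.factorial := by
    rw [← Finset.prod_range_add_one_eq_factorial]
    push_cast
    rw [← mul_pow]
    conv_rhs => rw [← Finset.card_range l, ← Finset.prod_const, Finset.card_range,
      ← Finset.prod_mul_distrib]
    refine Finset.prod_congr rfl fun j hj => ?_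
    ring
  rw [h1, h2]; ring

lemma sg_prodB (i l : ℕ) :
    ∏ j ∈ range (i + l + 1), (3 * (i : ℚ) - (3 * j + 1)) =
      - ((-1) ^ l * sgE 2 i * sgE 4 l) := by
  rw [sg_prod_split]
  have h1 : ∏ j ∈ range i, (3 * (i : ℚ) - (3 * ((i - 1 - j : ℕ) : ℚ) + 1)) = sgE 2 i := by
    unfold sgE
    push_cast
    refine Finset.prod_congr rfl fun j hj => ?_
    have := Finset.mem_range.1 hj
    rw [Nat.cast_sub (by omega), Nat.cast_sub (by omega)]
    push_cast; ring
  have h2 : ∏ j ∈ range l, (3 * (i : ℚ) - (3 * ((i + (j + 1) : ℕ) : ℚ) + 1)) =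
      (-1) ^ l * sgE 4 l := by
    unfold sgE
    push_cast
    conv_rhs => rw [← Finset.card_range l, ← Finset.prod_const, Finset.card_range,
      ← Finset.prod_mul_distrib]
    refine Finset.prod_congr rfl fun j hj => ?_
    ring
  rw [h1, h2]; ring

lemma sg_prodC (i l : ℕ) :
    ∏ j ∈ range (i + l + 1), (3 * (i : ℚ) + 1 - 3 * j) =
      ((-1) ^ l * sgE 4 i * sgE 2 l) := by
  rw [sg_prod_split]
  have h1 : ∏ j ∈ range i, (3 * (i : ℚ) + 1 - 3 * ((i - 1 - j : ℕ) : ℚ)) = sgE 4 i := by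
    unfold sgE
    push_cast
    refine Finset.prod_congr rfl fun j hj => ?_
    have := Finset.mem_range.1 hj
    rw [Nat.cast_sub (by omega), Nat.cast_sub (by omega)]
    push_cast; ring
  have h2 : ∏ j ∈ range l, (3 * (i : ℚ) + 1 - 3 * ((i + (j + 1) : ℕ) : ℚ)) =
      (-1) ^ l * sgE 2 l := by
    unfold sgE
    push_cast
    conv_rhs => rw [← Finset.card_range l, ← Finset.prod_const, Finset.card_range,
      ← Finset.prod_mul_distrib]
    refine Finset.prod_congr rfl fun j hj => ?_
    ring
  rw [h1, h2]; ring

/-- The interpolation nodes. -/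
def sgNode : ℕ ⊕ ℕ → ℚ := Sum.elim (fun i => 3 * i) (fun i => 3 * i + 1)

lemma sgNode_inj : Function.Injective sgNode := by
  rintro (i | i) (j | j) h <;> simp only [sgNode, Sum.elim_inl, Sum.elim_inr] at h <;>
    norm_cast at h
  · congr 1; omega
  · omega
  · omega
  · congr 1; omega

lemma sg_sum_zero (k : ℕ) (g : Polynomial ℚ) (hg : g.degree < (2 * k + 1 : ℕ)) :
    ∑ i ∈ range (k + 1), (sgV k (k - i) : ℚ) * g.eval (3 * (i : ℚ) + 1) -
      ∑ i ∈ range (k + 1), (sgV k i : ℚ) * g.eval (3 * (i : ℚ)) = 0 := by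
  set s : Finset (ℕ ⊕ ℕ) := (range (k + 1)).disjSum (range (k + 1)) with hs
  have hcard : #s = 2 * k + 2 := by rw [hs, Finset.card_disjSum, Finset.card_range]; ring
  have h := Lagrange.coeff_eq_sum (s := s) (v := sgNode) sgNode_inj.injOn (P := g)
    (by rw [hcard]; exact hg.trans (by exact_mod_cast Nat.lt_succ_self _))
  rw [hcard, Polynomial.coeff_eq_zero_of_degree_lt (by exact_mod_cast hg), hs,
    Finset.sum_disjSum] at h
  have e1 : ∀ i : ℕ, ((range (k + 1)).disjSum (range (k + 1))).erase (Sum.inl i) =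
      ((range (k + 1)).erase i).disjSum (range (k + 1)) := by
    intro i; ext x; rcases x with x | x <;> simp
  have e2 : ∀ i : ℕ, ((range (k + 1)).disjSum (range (k + 1))).erase (Sum.inr i) =
      (range (k + 1)).disjSum ((range (k + 1)).erase i) := by
    intro i; ext x; rcases x with x | x <;> simp
  simp only [e1, e2, Finset.prod_disjSum] at h
  simp only [sgNode, Sum.elim_inl, Sum.elim_inr, add_sub_add_right_eq_sub] at h
  have key := congrArg (fun t => (3 : ℚ) ^ k * (3 ^ k * sgE 2 k * sgE 4 k) * t) h
  simp only [mul_zero, mul_add, Finset.mul_sum] at key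
  rw [key, sub_eq_add_neg, add_comm, ← Finset.sum_neg_distrib]
  have hE2 := fun l => sgE_ne 2 l (by norm_num)
  have hE4 := fun l => sgE_ne 4 l (by norm_num)
  have hF : ∀ l : ℕ, (l.factorial : ℚ) ≠ 0 := fun l => by exact_mod_cast Nat.factorial_ne_zero l
  have hm : ∀ l : ℕ, ((-1 : ℚ) ^ l) * (-1) ^ l = 1 := fun l => by rw [← mul_pow]; norm_num
  congr 1
  · refine Finset.sum_congr rfl fun i hi => ?_
    obtain ⟨l, rfl⟩ := Nat.exists_eq_add_of_le (Nat.lt_succ_iff.1 (Finset.mem_range.1 hi))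
    rw [sg_prodA, sg_prodB, sgV_cast _ _ (by omega), Nat.add_sub_cancel_left]
    have := hE2 i; have := hE4 l; have := hF i; have := hF l
    have h3 : (3 ^ (i + l) * (i.factorial : ℚ) * (-1) ^ l * l.factorial) *
        -((-1) ^ l * sgE 2 i * sgE 4 l) =
        - (3 ^ (i + l) * i.factorial * l.factorial * sgE 2 i * sgE 4 l) := by
      linear_combination (-(3 ^ (i + l) * i.factorial * l.factorial * sgE 2 i * sgE 4 l : ℚ)) * hm l
    rw [h3]
    field_simp
  · refine Finset.sum_congr rfl fun i hi => ?_
    obtain ⟨l, rfl⟩ := Nat.exists_eq_add_of_le (Nat.lt_succ_iff.1 (Finset.mem_range.1 hi))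
    rw [sg_prodA, sg_prodC, sgV_cast _ _ (by omega), Nat.add_sub_cancel_left,
      Nat.add_sub_cancel]
    have := hE2 l; have := hE4 i; have := hF i; have := hF l
    have h3 : ((-1) ^ l * sgE 4 i * sgE 2 l) *
        (3 ^ (i + l) * (i.factorial : ℚ) * (-1) ^ l * l.factorial) =
        (3 ^ (i + l) * i.factorial * l.factorial * sgE 4 i * sgE 2 l) := by
      linear_combination ((3 ^ (i + l) * i.factorial * l.factorial * sgE 4 i * sgE 2 l : ℚ)) * hm l
    rw [h3]
    field_simp

end

section

open Finset

lemma sg_moment (k j : ℕ) (hj : j < 2 * k + 1) :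
    ∑ i ∈ range (k + 1), sgV k (k - i) * (3 * i + 1).choose j =
      ∑ i ∈ range (k + 1), sgV k i * (3 * i).choose j := by
  have h := sg_sum_zero k (descPochhammer ℚ j) (by
    refine lt_of_le_of_lt Polynomial.degree_le_natDegree ?_
    rw [descPochhammer_natDegree]; exact_mod_cast hj)
  have e : ∀ n : ℕ, (descPochhammer ℚ j).eval (n : ℚ) = j.factorial * n.choose j := by
    intro n
    rw [descPochhammer_eval_eq_descFactorial, Nat.descFactorial_eq_factorial_mul_choose]
    push_cast; rfl
  have e1 : ∀ i : ℕ, (3 * (i : ℚ) + 1) = ((3 * i + 1 : ℕ) : ℚ) := fun i => by push_cast; rfl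
  have e2 : ∀ i : ℕ, (3 * (i : ℚ)) = ((3 * i : ℕ) : ℚ) := fun i => by push_cast; rfl
  simp only [e1] at h
  simp only [e2, e] at h
  have hF : (j.factorial : ℚ) ≠ 0 := by exact_mod_cast Nat.factorial_ne_zero j
  have h' : (j.factorial : ℚ) * ((∑ i ∈ range (k + 1), sgV k (k - i) * (3 * i + 1).choose j : ℕ) : ℚ) =
      j.factorial * ((∑ i ∈ range (k + 1), sgV k i * (3 * i).choose j : ℕ) : ℚ) := by
    rw [sub_eq_zero] at h
    push_cast
    rw [Finset.mul_sum, Finset.mul_sum]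
    convert h using 2 with i _ i _ <;> ring
  exact_mod_cast mul_left_cancel₀ hF h'

/-- First Pade polynomial (evaluated). -/
def sgP {A : Type*} [CommRing A] (k : ℕ) (t : A) : A := ∑ i ∈ range (k + 1), (sgV k i : A) * t ^ i

/-- Second Pade polynomial (evaluated). -/
def sgQ {A : Type*} [CommRing A] (k : ℕ) (t : A) : A :=
  ∑ i ∈ range (k + 1), (sgV k (k - i) : A) * t ^ i

/-- Taylor coefficients of the remainder. -/
def sgR (k j : ℕ) : ℤ :=
  ∑ i ∈ range (k + 1), (sgV k (k - i) : ℤ) * ((3 * i + 1).choose j : ℤ) -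
      ∑ i ∈ range (k + 1), (sgV k i : ℤ) * ((3 * i).choose j : ℤ)

lemma sg_add_pow {A : Type*} [CommRing A] (Y : A) (n N : ℕ) (h : n < N) :
    (1 + Y) ^ n = ∑ j ∈ range N, (n.choose j : A) * Y ^ j := by
  rw [add_comm, add_pow]
  simp only [one_pow, mul_one]
  rw [← Finset.sum_subset (Finset.range_subset_range.2 (Nat.succ_le_of_lt h))]
  · refine Finset.sum_congr rfl fun i _ => mul_comm _ _
  · intro x _ hx
    rw [Nat.choose_eq_zero_of_lt (by simpa using hx)]; simp

lemma sg_taylor {A : Type*} [CommRing A] (k : ℕ) (Y : A) :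
    (1 + Y) * sgQ k ((1 + Y) ^ 3) - sgP k ((1 + Y) ^ 3) =
      Y ^ (2 * k + 1) * ∑ j ∈ range (k + 1), (sgR k (2 * k + 1 + j) : A) * Y ^ j := by
  have h1 : (1 + Y) * sgQ k ((1 + Y) ^ 3) - sgP k ((1 + Y) ^ 3) =
      ∑ j ∈ range (2 * k + 1 + (k + 1)), (sgR k j : A) * Y ^ j := by
    have hQ : (1 + Y) * sgQ k ((1 + Y) ^ 3) = ∑ j ∈ range (2 * k + 1 + (k + 1)),
        (∑ i ∈ range (k + 1), (sgV k (k - i) : A) * ((3 * i + 1).choose j : A)) * Y ^ j := by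
      simp only [sgQ, Finset.mul_sum, Finset.sum_mul]
      rw [Finset.sum_comm]
      refine Finset.sum_congr rfl fun i hi => ?_
      have := Finset.mem_range.1 hi
      rw [← pow_mul, mul_left_comm, ← pow_succ', sg_add_pow Y _ (2 * k + 1 + (k + 1)) (by omega),
        Finset.mul_sum]
      refine Finset.sum_congr rfl fun j _ => by ring
    have hP : sgP k ((1 + Y) ^ 3) = ∑ j ∈ range (2 * k + 1 + (k + 1)),
        (∑ i ∈ range (k + 1), (sgV k i : A) * ((3 * i).choose j : A)) * Y ^ j := by
      simp only [sgP, Finset.sum_mul]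
      rw [Finset.sum_comm]
      refine Finset.sum_congr rfl fun i hi => ?_
      have := Finset.mem_range.1 hi
      rw [← pow_mul, sg_add_pow Y _ (2 * k + 1 + (k + 1)) (by omega),
        Finset.mul_sum]
      refine Finset.sum_congr rfl fun j _ => by ring
    rw [hQ, hP, ← Finset.sum_sub_distrib]
    refine Finset.sum_congr rfl fun j _ => ?_
    rw [← sub_mul, sgR]
    push_cast
    rfl
  rw [h1, Finset.sum_range_add, Finset.sum_eq_zero, zero_add, Finset.mul_sum]
  · refine Finset.sum_congr rfl fun j _ => by ring
  · intro j hj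
    have h0 : sgR k j = 0 := by
      have := sg_moment k j (Finset.mem_range.1 hj)
      rw [sgR, sub_eq_zero]
      exact_mod_cast this
    rw [h0]; simp

lemma sgP_map {A B : Type*} [CommRing A] [CommRing B] (φ : A →+* B) (k : ℕ) (t : A) :
    φ (sgP k t) = sgP k (φ t) := by simp [sgP]

lemma sgQ_map {A B : Type*} [CommRing A] [CommRing B] (φ : A →+* B) (k : ℕ) (t : A) :
    φ (sgQ k t) = sgQ k (φ t) := by simp [sgQ]

lemma sg_det_zero (k : ℕ) : sgV k 0 * sgV (k + 1) (k + 1) ≠ sgV (k + 1) 0 * sgV k k := by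
  intro h
  have h' : (sgV k 0 : ℚ) * sgV (k + 1) (k + 1) = sgV (k + 1) 0 * sgV k k := by exact_mod_cast h
  rw [sgV_cast _ _ (by omega), sgV_cast _ _ (by omega), sgV_cast _ _ (by omega),
    sgV_cast _ _ (by omega)] at h'
  have hE2 := sgE_ne 2 k (by norm_num)
  have hE4 := sgE_ne 4 k (by norm_num)
  have hE2' := sgE_ne 2 (k + 1) (by norm_num)
  have hE4' := sgE_ne 4 (k + 1) (by norm_num)
  have s2 : (sgE 2 (k + 1) : ℚ) = sgE 2 k * (3 * k + 2) := by
    unfold sgE; rw [Finset.prod_range_succ]; push_cast; rfl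
  have s4 : (sgE 4 (k + 1) : ℚ) = sgE 4 k * (3 * k + 4) := by
    unfold sgE; rw [Finset.prod_range_succ]; push_cast; rfl
  have hF : ∀ l : ℕ, (l.factorial : ℚ) ≠ 0 := fun l => by exact_mod_cast Nat.factorial_ne_zero l
  have := hF k; have := hF (k + 1)
  have e2 : sgE 2 0 = 1 := rfl
  have e4 : sgE 4 0 = 1 := rfl
  simp only [Nat.sub_zero, Nat.sub_self, e2, e4, Nat.factorial_zero, Nat.cast_one, one_mul,
    mul_one] at h'
  field_simp at h'
  rw [s2, s4] at h'
  have h3 : (sgE 2 k : ℚ) * sgE 4 k * 2 = 0 := by linear_combination h'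
  simp [hE2, hE4] at h3

open Polynomial in
lemma sg_det {F : Type*} [Field F] [CharZero F] (k : ℕ) (t : F) (ht : t ≠ 1) :
    sgP k t * sgQ (k + 1) t ≠ sgP (k + 1) t * sgQ k t := by
  set D : F[X] := sgP k X * sgQ (k + 1) X - sgP (k + 1) X * sgQ k X with hD
  have ev : ∀ x : F, D.eval x = sgP k x * sgQ (k + 1) x - sgP (k + 1) x * sgQ k x := by
    intro x
    have := sgP_map (evalRingHom x) k X
    have := sgQ_map (evalRingHom x) k X
    have := sgP_map (evalRingHom x) (k + 1) X
    have := sgQ_map (evalRingHom x) (k + 1) X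
    simp only [coe_evalRingHom, eval_X] at *
    simp [hD, *]
  have hP0 : ∀ k, sgP k (0 : F) = sgV k 0 := by
    intro k; unfold sgP; rw [Finset.sum_range_succ']; simp
  have hQ0 : ∀ k, sgQ k (0 : F) = sgV k k := by
    intro k; unfold sgQ; rw [Finset.sum_range_succ']; simp
  have hD0 : D.eval 0 ≠ 0 := by
    rw [ev, hP0, hP0, hQ0, hQ0, sub_ne_zero]
    exact_mod_cast sg_det_zero k
  have hDne : D ≠ 0 := by rintro h; simp [h] at hD0
  have dP : ∀ k, (sgP k (X : F[X])).natDegree ≤ k := by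
    intro k
    unfold sgP
    refine natDegree_sum_le_of_forall_le _ _ fun i hi => ?_
    have := Finset.mem_range.1 hi
    refine le_trans (natDegree_mul_le) ?_
    rw [natDegree_natCast, natDegree_X_pow]; omega
  have dQ : ∀ k, (sgQ k (X : F[X])).natDegree ≤ k := by
    intro k
    unfold sgQ
    refine natDegree_sum_le_of_forall_le _ _ fun i hi => ?_
    have := Finset.mem_range.1 hi
    refine le_trans (natDegree_mul_le) ?_
    rw [natDegree_natCast, natDegree_X_pow]; omega
  have hdeg : D.natDegree ≤ 2 * k + 1 := by
    refine (natDegree_sub_le _ _).trans (max_le ?_ ?_) <;> refine natDegree_mul_le.trans ?_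
    · have := dP k; have := dQ (k + 1); omega
    · have := dP (k + 1); have := dQ k; omega
  obtain ⟨E, hE, hnd⟩ := exists_eq_pow_rootMultiplicity_mul_and_not_dvd D hDne 1
  set m := rootMultiplicity 1 D
  have hE1 : E.eval 1 ≠ 0 := by rwa [Ne, ← IsRoot.def, ← dvd_iff_isRoot]
  -- divisibility
  have hdvd : (X - C (1 : F)) ^ (2 * k + 1) ∣ D.comp (X ^ 3) := by
    have c1 : D.comp (X ^ 3) = sgP k ((X : F[X]) ^ 3) * sgQ (k + 1) (X ^ 3) -
        sgP (k + 1) (X ^ 3) * sgQ k (X ^ 3) := by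
      have := sgP_map (compRingHom ((X : F[X]) ^ 3)) k X
      have := sgQ_map (compRingHom ((X : F[X]) ^ 3)) k X
      have := sgP_map (compRingHom ((X : F[X]) ^ 3)) (k + 1) X
      have := sgQ_map (compRingHom ((X : F[X]) ^ 3)) (k + 1) X
      simp only [coe_compRingHom, X_comp] at *
      simp [hD, *]
    have t1 := sg_taylor k ((X : F[X]) - C 1)
    have t2 := sg_taylor (k + 1) ((X : F[X]) - C 1)
    have hx : (1 : F[X]) + (X - C 1) = X := by simp
    rw [hx] at t1 t2
    rw [c1, show sgP k ((X : F[X]) ^ 3) * sgQ (k + 1) (X ^ 3) -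
        sgP (k + 1) (X ^ 3) * sgQ k (X ^ 3) =
        (X * sgQ (k + 1) (X ^ 3) - sgP (k + 1) (X ^ 3)) * sgQ k (X ^ 3) -
        (X * sgQ k (X ^ 3) - sgP k (X ^ 3)) * sgQ (k + 1) (X ^ 3) by ring, t1, t2]
    refine dvd_sub ?_ ?_
    · refine Dvd.dvd.mul_right (Dvd.dvd.mul_right (pow_dvd_pow _ (by omega)) _) _
    · refine Dvd.dvd.mul_right (Dvd.dvd.mul_right (pow_dvd_pow _ (by omega)) _) _
  have hm : 2 * k + 1 ≤ m := by
    by_contra hlt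
    push Not at hlt
    rw [hE] at hdvd
    have c2 : ((X - C 1) ^ m * E).comp ((X : F[X]) ^ 3) =
        (X - C 1) ^ m * ((X ^ 2 + X + 1) ^ m * E.comp (X ^ 3)) := by
      rw [mul_comp, pow_comp, ← mul_assoc, ← mul_pow]
      congr 2
      simp; ring
    obtain ⟨r, hr⟩ := Nat.exists_eq_add_of_lt hlt
    rw [c2, show 2 * k + 1 = m + (r + 1) by omega, pow_add,
      mul_dvd_mul_iff_left (pow_ne_zero _ (X_sub_C_ne_zero 1))] at hdvd
    have h2 := (dvd_pow_self (X - C (1:F)) (Nat.succ_ne_zero r)).trans hdvd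
    rw [dvd_iff_isRoot, IsRoot.def] at h2
    simp [eval_comp] at h2
    rcases h2 with h2 | h2
    · have := h2.1
      norm_num at this
    · exact hE1 h2
  have hEc : E.natDegree = 0 := by
    have hE0 : E ≠ 0 := by rintro rfl; simp at hE1
    have : D.natDegree = m + E.natDegree := by
      rw [hE, natDegree_mul (pow_ne_zero _ (X_sub_C_ne_zero 1)) hE0, natDegree_pow,
        natDegree_X_sub_C, mul_one]
    omega
  rw [← sub_ne_zero, ← ev, hE]
  rw [eq_C_of_natDegree_eq_zero hEc] at hE1 ⊢
  simp only [eval_C, eval_mul, eval_pow, eval_sub, eval_X] at hE1 ⊢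
  exact mul_ne_zero (pow_ne_zero _ (sub_ne_zero.2 ht)) hE1

end

section

open Finset

/-- Homogenized first Pade polynomial. -/
def sgPh {A : Type*} [CommRing A] (k : ℕ) (T U : A) : A :=
  ∑ i ∈ range (k + 1), (sgV k i : A) * (T ^ i * U ^ (k - i))

/-- Homogenized second Pade polynomial. -/
def sgQh {A : Type*} [CommRing A] (k : ℕ) (T U : A) : A :=
  ∑ i ∈ range (k + 1), (sgV k (k - i) : A) * (T ^ i * U ^ (k - i))

lemma sgPh_map {A B : Type*} [CommRing A] [CommRing B] (φ : A →+* B) (k : ℕ) (t u : A) :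
    φ (sgPh k t u) = sgPh k (φ t) (φ u) := by simp [sgPh]

lemma sgQh_map {A B : Type*} [CommRing A] [CommRing B] (φ : A →+* B) (k : ℕ) (t u : A) :
    φ (sgQh k t u) = sgQh k (φ t) (φ u) := by simp [sgQh]

lemma sgPh_eq {F : Type*} [Field F] (k : ℕ) (x U : F) : sgPh k (x * U) U = U ^ k * sgP k x := by
  unfold sgPh sgP
  rw [Finset.mul_sum]
  refine Finset.sum_congr rfl fun i hi => ?_
  obtain ⟨l, rfl⟩ := Nat.exists_eq_add_of_le (Nat.lt_succ_iff.1 (Finset.mem_range.1 hi))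
  rw [Nat.add_sub_cancel_left, mul_pow, pow_add]; ring

lemma sgQh_eq {F : Type*} [Field F] (k : ℕ) (x U : F) : sgQh k (x * U) U = U ^ k * sgQ k x := by
  unfold sgQh sgQ
  rw [Finset.mul_sum]
  refine Finset.sum_congr rfl fun i hi => ?_
  obtain ⟨l, rfl⟩ := Nat.exists_eq_add_of_le (Nat.lt_succ_iff.1 (Finset.mem_range.1 hi))
  rw [Nat.add_sub_cancel_left, mul_pow, pow_add]; ring

lemma sg_succ_le (k : ℕ) : ((k : ℝ) + 1) ≤ 2 ^ k := by
  exact_mod_cast Nat.succ_le_of_lt (Nat.lt_two_pow_self (n := k))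

lemma sg_form_bound (k : ℕ) (v : ℕ → ℕ) (hv : ∀ i ≤ k, v i ≤ 4 * 324 ^ k) (T U : ℂ) (B : ℝ)
    (hT : ‖T‖ ≤ B) (hU : ‖U‖ ≤ B) :
    ‖∑ i ∈ range (k + 1), (v i : ℂ) * (T ^ i * U ^ (k - i))‖ ≤ 20000 ^ (k + 1) * B ^ k := by
  have hB : 0 ≤ B := (norm_nonneg _).trans hT
  have : ∀ i ∈ range (k + 1), ‖(v i : ℂ) * (T ^ i * U ^ (k - i))‖ ≤ 4 * 324 ^ k * B ^ k := by
    intro i hi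
    have hik := Nat.lt_succ_iff.1 (Finset.mem_range.1 hi)
    rw [norm_mul, norm_mul, norm_pow, norm_pow, Complex.norm_natCast]
    have h1 : (v i : ℝ) ≤ 4 * 324 ^ k := by exact_mod_cast hv i hik
    have h2 : B ^ k = B ^ i * B ^ (k - i) := by rw [← pow_add, Nat.add_sub_cancel' hik]
    rw [h2]
    gcongr
  refine (norm_sum_le_of_le _ this).trans ?_
  rw [Finset.sum_const, Finset.card_range, nsmul_eq_mul]
  push_cast
  have := sg_succ_le k
  calc ((k : ℝ) + 1) * (4 * 324 ^ k * B ^ k) ≤ 2 ^ k * (4 * 324 ^ k * B ^ k) := by gcongr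
    _ = 4 * 648 ^ k * B ^ k := by rw [show (648 : ℝ) = 2 * 324 by norm_num, mul_pow]; ring
    _ ≤ 20000 * 20000 ^ k * B ^ k := by gcongr <;> norm_num
    _ = _ := by rw [pow_succ]; ring

lemma sgPh_bound (k : ℕ) (T U : ℂ) (B : ℝ) (hT : ‖T‖ ≤ B) (hU : ‖U‖ ≤ B) :
    ‖sgPh k T U‖ ≤ 20000 ^ (k + 1) * B ^ k :=
  sg_form_bound k (fun i => sgV k i) (fun i hi => sgV_le k i hi) T U B hT hU

lemma sgQh_bound (k : ℕ) (T U : ℂ) (B : ℝ) (hT : ‖T‖ ≤ B) (hU : ‖U‖ ≤ B) :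
    ‖sgQh k T U‖ ≤ 20000 ^ (k + 1) * B ^ k :=
  sg_form_bound k (fun i => sgV k (k - i)) (fun i _ => sgV_le k (k - i) (by omega)) T U B hT hU

lemma sgR_bound (k j : ℕ) : |(sgR k j : ℝ)| ≤ 16 * 5184 ^ k := by
  have hch : ∀ n, n ≤ 3 * k + 1 → ((n.choose j : ℕ) : ℝ) ≤ 2 ^ (3 * k + 1) := by
    intro n hn
    have h1 : n.choose j ≤ 2 ^ n := Nat.choose_le_two_pow _ _
    have h2 : 2 ^ n ≤ 2 ^ (3 * k + 1) := Nat.pow_le_pow_right (by norm_num) hn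
    exact_mod_cast h1.trans h2
  have hsum : ∀ (v n : ℕ → ℕ), (∀ i ≤ k, v i ≤ 4 * 324 ^ k) → (∀ i ≤ k, n i ≤ 3 * k + 1) →
      |∑ i ∈ range (k + 1), (v i : ℝ) * ((n i).choose j : ℝ)| ≤ 8 * 5184 ^ k := by
    intro v n hv hn
    have : ∀ i ∈ range (k + 1), |(v i : ℝ) * ((n i).choose j : ℝ)| ≤
        4 * 324 ^ k * 2 ^ (3 * k + 1) := by
      intro i hi
      have hik := Nat.lt_succ_iff.1 (Finset.mem_range.1 hi)
      rw [abs_of_nonneg (by positivity)]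
      have h1 : (v i : ℝ) ≤ 4 * 324 ^ k := by exact_mod_cast hv i hik
      have := hch _ (hn i hik)
      gcongr
    refine (Finset.abs_sum_le_sum_abs _ _).trans ((Finset.sum_le_sum this).trans ?_)
    rw [Finset.sum_const, Finset.card_range, nsmul_eq_mul]
    push_cast
    have := sg_succ_le k
    calc ((k : ℝ) + 1) * (4 * 324 ^ k * 2 ^ (3 * k + 1)) ≤
        2 ^ k * (4 * 324 ^ k * 2 ^ (3 * k + 1)) := by gcongr
      _ = 8 * 5184 ^ k := by
        rw [pow_succ, pow_mul, show (5184 : ℝ) = 2 * 324 * 2 ^ 3 by norm_num, mul_pow, mul_pow]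
        ring
  unfold sgR
  push_cast
  refine (abs_sub _ _).trans ?_
  have h1 := hsum (fun i => sgV k (k - i)) (fun i => 3 * i + 1)
    (fun i _ => sgV_le k (k - i) (by omega)) (fun i hi => by omega)
  have h2 := hsum (fun i => sgV k i) (fun i => 3 * i)
    (fun i hi => sgV_le k i hi) (fun i hi => by omega)
  linarith

lemma sg_rem_bound (k : ℕ) (X : ℂ) (hX : ‖X - 1‖ ≤ 1) :
    ‖X * sgQ k (X ^ 3) - sgP k (X ^ 3)‖ ≤ 20000 ^ (k + 1) * ‖X - 1‖ ^ (2 * k + 1) := by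
  have h := sg_taylor k (X - 1)
  rw [add_sub_cancel] at h
  rw [h, norm_mul, norm_pow, mul_comm]
  gcongr
  have : ∀ j ∈ range (k + 1), ‖(sgR k (2 * k + 1 + j) : ℂ) * (X - 1) ^ j‖ ≤ 16 * 5184 ^ k := by
    intro j _
    rw [norm_mul, norm_pow, Complex.norm_intCast]
    calc |(sgR k (2 * k + 1 + j) : ℝ)| * ‖X - 1‖ ^ j ≤ (16 * 5184 ^ k) * 1 := by
          gcongr
          · exact sgR_bound _ _
          · exact pow_le_one₀ (norm_nonneg _) hX
      _ = _ := mul_one _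
  refine (norm_sum_le_of_le _ this).trans ?_
  rw [Finset.sum_const, Finset.card_range, nsmul_eq_mul]
  push_cast
  have := sg_succ_le k
  calc ((k : ℝ) + 1) * (16 * 5184 ^ k) ≤ 2 ^ k * (16 * 5184 ^ k) := by gcongr
    _ = 16 * 10368 ^ k := by rw [show (10368 : ℝ) = 2 * 5184 by norm_num, mul_pow]; ring
    _ ≤ 20000 * 20000 ^ k := by gcongr <;> norm_num
    _ = _ := by rw [pow_succ]; ring

lemma sg_cube (X : ℂ) (h : ‖X ^ 3 - 1‖ ≤ 1 / 1000) :
    ∃ ζ : ℂ, ζ ^ 3 = 1 ∧ ‖ζ * X - 1‖ ≤ ‖X ^ 3 - 1‖ := by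
  obtain ⟨s, hs⟩ := IsAlgClosed.exists_pow_nat_eq (-3 : ℂ) (n := 2) (by norm_num)
  obtain ⟨ω, hω⟩ : ∃ ω : ℂ, ω ^ 2 + ω + 1 = 0 := ⟨(-1 + s) / 2, by linear_combination hs / 4⟩
  have hω3 : ω ^ 3 = 1 := by linear_combination (ω - 1) * hω
  have hfac : X ^ 3 - 1 = (X - 1) * (X - ω) * (X - ω ^ 2) := by
    linear_combination ((X - 1) * X) * hω - (X - 1) * hω3
  have key : ∃ η : ℂ, η ^ 3 = 1 ∧ ‖X - η‖ ≤ 1 / 10 := by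
    by_contra hcon
    push Not at hcon
    have h1 := hcon 1 (by norm_num)
    have h2 := hcon ω hω3
    have h3 := hcon (ω ^ 2) (by rw [← pow_mul, mul_comm, pow_mul, hω3, one_pow])
    rw [hfac, norm_mul, norm_mul] at h
    have : (1 / 10 : ℝ) * (1 / 10) * (1 / 10) < ‖X - 1‖ * ‖X - ω‖ * ‖X - ω ^ 2‖ := by
      gcongr
    linarith
  obtain ⟨η, hη, hX⟩ := key
  have hn : ‖η‖ = 1 := by
    have := congrArg norm hη
    rw [norm_pow, norm_one] at this
    exact (pow_eq_one_iff_of_nonneg (norm_nonneg _) (by norm_num)).1 this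
  refine ⟨η ^ 2, by rw [← pow_mul, mul_comm, pow_mul, hη, one_pow], ?_⟩
  set Y := η ^ 2 * X with hY
  have hY1 : ‖Y - 1‖ ≤ 1 / 10 := by
    have : Y - 1 = η ^ 2 * (X - η) := by rw [hY]; linear_combination hη
    rw [this, norm_mul, norm_pow, hn]; simpa using hX
  have hY3 : X ^ 3 - 1 = (Y - 1) * (3 + (3 * (Y - 1) + (Y - 1) ^ 2)) := by
    have : Y ^ 3 = X ^ 3 := by
      rw [hY]; linear_combination (X ^ 3 * (η ^ 3 + 1)) * hη
    rw [← this]; ring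
  have hlow : 1 ≤ ‖3 + (3 * (Y - 1) + (Y - 1) ^ 2)‖ := by
    have h1 : ‖3 * (Y - 1) + (Y - 1) ^ 2‖ ≤ 3 * (1 / 10) + (1 / 10) ^ 2 := by
      refine (norm_add_le _ _).trans ?_
      rw [norm_mul, norm_pow]
      have : ‖(3 : ℂ)‖ = 3 := by simp
      rw [this]; gcongr
    have h2 := norm_sub_le (3 + (3 * (Y - 1) + (Y - 1) ^ 2)) (3 * (Y - 1) + (Y - 1) ^ 2)
    rw [add_sub_cancel_right] at h2
    have : ‖(3 : ℂ)‖ = 3 := by simp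
    rw [this] at h2
    norm_num at h1
    linarith
  rw [hY3, norm_mul]
  exact le_mul_of_one_le_right (norm_nonneg _) hlow

end

section

open Finset

lemma sg_root (a b c : ℂ) (ha : a ≠ 0) (hb : b ≠ 0) : ∃ C : ℝ, 1 ≤ C ∧ ∀ (w z : ℂ) (M : ℝ),
    a * w ^ 3 - b * z ^ 3 = c → M = max 1 (max ‖w‖ ‖z‖) → ∃ α : ℂ, α ^ 3 = b / a ∧
      (M ≤ C ∨ (w ≠ 0 ∧ ‖α * z / w - 1‖ ≤ C / M ^ 3 ∧ ‖α * z / w - 1‖ ≤ 1)) := by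
  have ha' : 0 < ‖a‖ := norm_pos_iff.2 ha
  have hb' : 0 < ‖b‖ := norm_pos_iff.2 hb
  set E : ℝ := 1 + 2 * ‖a‖ / ‖b‖ with hE
  have hEp : 1 ≤ E := by rw [hE]; have : 0 ≤ 2 * ‖a‖ / ‖b‖ := by positivity
                         linarith
  set G : ℝ := ‖c‖ * E / ‖a‖ with hG
  have hGp : 0 ≤ G := by positivity
  have hcb : 0 ≤ 2 * ‖c‖ / ‖b‖ := by positivity
  refine ⟨1 + 2 * ‖c‖ / ‖b‖ + 1000 * G, by linarith, ?_⟩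
  intro w z M heq hM
  obtain ⟨α₀, hα₀⟩ := IsAlgClosed.exists_pow_nat_eq (b / a) (n := 3) (by norm_num)
  by_cases hMC : M ≤ 1 + 2 * ‖c‖ / ‖b‖ + 1000 * G
  · exact ⟨α₀, hα₀, Or.inl hMC⟩
  push Not at hMC
  have hM1 : 1 ≤ M := by rw [hM]; exact le_max_left _ _
  have hM3 : M ≤ M ^ 3 := by nlinarith [sq_nonneg (M - 1), sq_nonneg M]
  have hMpos : 0 < M ^ 3 := by positivity
  have hw : M ^ 3 ≤ E * ‖w‖ ^ 3 := by
    have hcase : M = ‖w‖ ∨ M = ‖z‖ := by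
      have hMne : M > 1 := by linarith
      rcases le_total ‖w‖ ‖z‖ with h | h
      · right
        rw [max_eq_right h] at hM
        rcases max_choice 1 ‖z‖ with h' | h' <;> rw [h'] at hM
        · linarith
        · exact hM
      · left
        rw [max_eq_left h] at hM
        rcases max_choice 1 ‖w‖ with h' | h' <;> rw [h'] at hM
        · linarith
        · exact hM
    rcases hcase with h | h
    · rw [h]; exact le_mul_of_one_le_left (by positivity) hEp
    · have h1 : ‖b‖ * M ^ 3 ≤ ‖a‖ * ‖w‖ ^ 3 + ‖c‖ := by
        have : b * z ^ 3 = a * w ^ 3 - c := by rw [← heq]; ring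
        have h2 := congrArg norm this
        rw [norm_mul, norm_pow, ← h] at h2
        rw [h2]
        refine (norm_sub_le _ _).trans ?_
        rw [norm_mul, norm_pow]
      have h3 : 2 * ‖c‖ ≤ ‖b‖ * M ^ 3 := by
        have : 2 * ‖c‖ / ‖b‖ ≤ M ^ 3 := by linarith
        rwa [div_le_iff₀' hb'] at this
      have h4 : M ^ 3 ≤ 2 * ‖a‖ / ‖b‖ * ‖w‖ ^ 3 := by
        rw [div_mul_eq_mul_div, le_div_iff₀ hb']; nlinarith
      rw [hE]; nlinarith [pow_nonneg (norm_nonneg w) 3]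
  have hw0 : w ≠ 0 := by
    rintro rfl
    simp at hw
    linarith
  set X := α₀ * z / w with hX
  have hX3 : X ^ 3 - 1 = -(c / (a * w ^ 3)) := by
    rw [hX, div_pow, mul_pow, hα₀, ← heq]
    field_simp
    ring
  have hXb : ‖X ^ 3 - 1‖ ≤ G / M ^ 3 := by
    rw [hX3, norm_neg, norm_div, norm_mul, norm_pow, div_le_div_iff₀ (by positivity) hMpos, hG,
      div_mul_eq_mul_div, le_div_iff₀ ha']
    calc ‖c‖ * M ^ 3 * ‖a‖ ≤ ‖c‖ * (E * ‖w‖ ^ 3) * ‖a‖ := by gcongr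
      _ = _ := by ring
  have hXs : ‖X ^ 3 - 1‖ ≤ 1 / 1000 := by
    refine hXb.trans ?_
    rw [div_le_div_iff₀ hMpos (by norm_num)]
    linarith
  obtain ⟨ζ, hζ, hζX⟩ := sg_cube X hXs
  have e : ζ * α₀ * z / w = ζ * X := by rw [hX]; ring
  refine ⟨ζ * α₀, by rw [mul_pow, hζ, hα₀, one_mul], Or.inr ⟨hw0, ?_, ?_⟩⟩
  · rw [e]
    refine hζX.trans (hXb.trans ?_)
    gcongr
    linarith
  · rw [e]
    exact hζX.trans (hXs.trans (by norm_num))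

lemma sg_local (a b : ℂ) (ha : a ≠ 0) (hb : b ≠ 0) (C₀ : ℝ) (hC₀ : 1 ≤ C₀) :
    ∃ C : ℝ, 1 ≤ C ∧ ∀ (k : ℕ) (α w₁ z₁ w₂ z₂ : ℂ) (M₁ M₂ : ℝ), α ^ 3 = b / a →
      M₁ = max 1 (max ‖w₁‖ ‖z₁‖) → M₂ = max 1 (max ‖w₂‖ ‖z₂‖) →
      (M₁ ≤ C₀ ∨ (w₁ ≠ 0 ∧ ‖α * z₁ / w₁ - 1‖ ≤ C₀ / M₁ ^ 3 ∧ ‖α * z₁ / w₁ - 1‖ ≤ 1)) →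
      (M₂ ≤ C₀ ∨ (w₂ ≠ 0 ∧ ‖α * z₂ / w₂ - 1‖ ≤ C₀ / M₂ ^ 3 ∧ ‖α * z₂ / w₂ - 1‖ ≤ 1)) →
      ‖z₁ * w₂ * sgQh k (b * z₁ ^ 3) (a * w₁ ^ 3) - z₂ * w₁ * sgPh k (b * z₁ ^ 3) (a * w₁ ^ 3)‖ ≤
        C ^ (k + 1) * (M₁ ^ (3 * k + 1) * M₂ * ((M₁ ^ (3 * (2 * k + 1)))⁻¹ + (M₂ ^ 3)⁻¹)) := by
  have ha' : 0 < ‖a‖ := norm_pos_iff.2 ha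
  have hb' : 0 < ‖b‖ := norm_pos_iff.2 hb
  set B : ℝ := 1 + ‖a‖ + ‖b‖ with hB
  set A : ℝ := 1 + ‖a / b‖ with hA
  have hB1 : 1 ≤ B := by rw [hB]; linarith
  have hA1 : 1 ≤ A := by rw [hA]; linarith [norm_nonneg (a / b)]
  have hC6 : 1 ≤ C₀ ^ 6 := one_le_pow₀ hC₀
  set C : ℝ := 2 * 20000 * A * B * C₀ ^ 6 with hC
  have hC1 : 1 ≤ C := by
    rw [hC]
    have : 1 ≤ A * B * C₀ ^ 6 := one_le_mul_of_one_le_of_one_le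
      (one_le_mul_of_one_le_of_one_le hA1 hB1) hC6
    nlinarith
  refine ⟨C, hC1, ?_⟩
  intro k α w₁ z₁ w₂ z₂ M₁ M₂ hα hM₁ hM₂ h₁ h₂
  have hM₁1 : 1 ≤ M₁ := by rw [hM₁]; exact le_max_left _ _
  have hM₂1 : 1 ≤ M₂ := by rw [hM₂]; exact le_max_left _ _
  have hw₁ : ‖w₁‖ ≤ M₁ := by rw [hM₁]; exact (le_max_left _ _).trans (le_max_right _ _)
  have hz₁ : ‖z₁‖ ≤ M₁ := by rw [hM₁]; exact (le_max_right _ _).trans (le_max_right _ _)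
  have hw₂ : ‖w₂‖ ≤ M₂ := by rw [hM₂]; exact (le_max_left _ _).trans (le_max_right _ _)
  have hz₂ : ‖z₂‖ ≤ M₂ := by rw [hM₂]; exact (le_max_right _ _).trans (le_max_right _ _)
  have hT : ‖b * z₁ ^ 3‖ ≤ B * M₁ ^ 3 := by
    rw [norm_mul, norm_pow]; gcongr; rw [hB]; linarith
  have hU : ‖a * w₁ ^ 3‖ ≤ B * M₁ ^ 3 := by
    rw [norm_mul, norm_pow]; gcongr; rw [hB]; linarith
  have hQb := sgQh_bound k _ _ _ hT hU
  have hPb := sgPh_bound k _ _ _ hT hU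
  set S : ℝ := 20000 ^ (k + 1) * (B * M₁ ^ 3) ^ k with hS
  have hSp : 0 ≤ S := by positivity
  -- the trivial bound
  have triv : ‖z₁ * w₂ * sgQh k (b * z₁ ^ 3) (a * w₁ ^ 3) -
      z₂ * w₁ * sgPh k (b * z₁ ^ 3) (a * w₁ ^ 3)‖ ≤ 2 * (M₁ * M₂ * S) := by
    refine (norm_sub_le _ _).trans ?_
    simp only [norm_mul] at *
    have e1 : ‖z₁‖ * ‖w₂‖ * ‖sgQh k (b * z₁ ^ 3) (a * w₁ ^ 3)‖ ≤ M₁ * M₂ * S := by gcongr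
    have e2 : ‖z₂‖ * ‖w₁‖ * ‖sgPh k (b * z₁ ^ 3) (a * w₁ ^ 3)‖ ≤ M₂ * M₁ * S := by gcongr
    linarith
  have hMS : M₁ * M₂ * S = 20000 ^ (k + 1) * B ^ k * (M₁ ^ (3 * k + 1) * M₂) := by
    rw [hS, mul_pow, ← pow_mul, pow_succ M₁]; ring
  have hMM : 0 ≤ M₁ ^ (3 * k + 1) * M₂ := by positivity
  have hBk : B ^ k ≤ B ^ (k + 1) := pow_le_pow_right₀ hB1 (Nat.le_succ k)
  have hCexp : C ^ (k + 1) = 2 ^ (k + 1) * 20000 ^ (k + 1) * A ^ (k + 1) * B ^ (k + 1) *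
      C₀ ^ (6 * (k + 1)) := by
    rw [hC, mul_pow, mul_pow, mul_pow, mul_pow, ← pow_mul]
  have h2k : (2 : ℝ) ≤ 2 ^ (k + 1) := by
    calc (2:ℝ) = 2 ^ 1 := by norm_num
      _ ≤ 2 ^ (k + 1) := pow_le_pow_right₀ (by norm_num) (by omega)
  have hAk : A ≤ A ^ (k + 1) := le_self_pow₀ hA1 (by omega)
  -- it suffices to prove a bound of this shape
  have trivfin : ∀ Z : ℝ, 1 ≤ C₀ ^ (6 * (k + 1)) * Z → 2 * (M₁ * M₂ * S) ≤
      C ^ (k + 1) * (M₁ ^ (3 * k + 1) * M₂ * Z) := by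
    intro Z hZ
    rw [hMS, hCexp]
    calc 2 * (20000 ^ (k + 1) * B ^ k * (M₁ ^ (3 * k + 1) * M₂))
        ≤ 2 ^ (k + 1) * 20000 ^ (k + 1) * 1 * B ^ (k + 1) * (M₁ ^ (3 * k + 1) * M₂) * 1 := by
          have : (2:ℝ) * (20000 ^ (k + 1) * B ^ k * (M₁ ^ (3 * k + 1) * M₂)) =
            2 * 20000 ^ (k + 1) * 1 * B ^ k * (M₁ ^ (3 * k + 1) * M₂) * 1 := by ring
          rw [this]; gcongr
      _ ≤ 2 ^ (k + 1) * 20000 ^ (k + 1) * A ^ (k + 1) * B ^ (k + 1) *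
          (M₁ ^ (3 * k + 1) * M₂) * (C₀ ^ (6 * (k + 1)) * Z) := by
          gcongr
          exact hA1.trans hAk
      _ = _ := by ring
  rcases h₁ with h₁ | ⟨hw₁0, h₁, h₁'⟩
  · refine triv.trans (trivfin _ ?_)
    have : (M₁ ^ (3 * (2 * k + 1))) ≤ C₀ ^ (6 * (k + 1)) :=
      (pow_le_pow_left₀ (by linarith) h₁ _).trans (pow_le_pow_right₀ hC₀ (by omega))
    have hp : 0 < M₁ ^ (3 * (2 * k + 1)) := by positivity
    calc 1 = M₁ ^ (3 * (2 * k + 1)) * (M₁ ^ (3 * (2 * k + 1)))⁻¹ := (mul_inv_cancel₀ hp.ne').symm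
      _ ≤ C₀ ^ (6 * (k + 1)) * ((M₁ ^ (3 * (2 * k + 1)))⁻¹ + (M₂ ^ 3)⁻¹) := by
        gcongr
        have : 0 ≤ (M₂ ^ 3)⁻¹ := by positivity
        linarith
  rcases h₂ with h₂ | ⟨hw₂0, h₂, h₂'⟩
  · refine triv.trans (trivfin _ ?_)
    have : (M₂ ^ 3) ≤ C₀ ^ (6 * (k + 1)) :=
      (pow_le_pow_left₀ (by linarith) h₂ _).trans (pow_le_pow_right₀ hC₀ (by omega))
    have hp : 0 < M₂ ^ 3 := by positivity
    calc 1 = M₂ ^ 3 * (M₂ ^ 3)⁻¹ := (mul_inv_cancel₀ hp.ne').symm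
      _ ≤ C₀ ^ (6 * (k + 1)) * ((M₁ ^ (3 * (2 * k + 1)))⁻¹ + (M₂ ^ 3)⁻¹) := by
        gcongr
        have : 0 ≤ (M₁ ^ (3 * (2 * k + 1)))⁻¹ := by positivity
        linarith
  -- main case
  have hα0 : α ≠ 0 := by
    rintro rfl
    have : b / a ≠ 0 := div_ne_zero hb ha
    exact this (by rw [← hα]; norm_num)
  have hαA : ‖α‖⁻¹ ≤ A := by
    have h3 : (‖α‖⁻¹) ^ 3 = ‖a / b‖ := by
      rw [inv_pow, ← norm_pow, hα, ← norm_inv, inv_div]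
    by_contra hlt
    push Not at hlt
    have h1 : 1 ≤ ‖α‖⁻¹ := hA1.trans hlt.le
    have h2 : ‖α‖⁻¹ ≤ (‖α‖⁻¹) ^ 3 := le_self_pow₀ h1 (by norm_num)
    rw [h3] at h2
    linarith
  set X₁ := α * z₁ / w₁ with hX₁
  set X₂ := α * z₂ / w₂ with hX₂
  have hTU : b * z₁ ^ 3 = X₁ ^ 3 * (a * w₁ ^ 3) := by
    rw [hX₁, div_pow, mul_pow, hα]; field_simp
  have hid : z₁ * w₂ * sgQh k (b * z₁ ^ 3) (a * w₁ ^ 3) -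
      z₂ * w₁ * sgPh k (b * z₁ ^ 3) (a * w₁ ^ 3) =
      (w₁ * w₂ / α) * ((a * w₁ ^ 3) ^ k * (X₁ * sgQ k (X₁ ^ 3) - sgP k (X₁ ^ 3)) -
        (X₂ - 1) * sgPh k (b * z₁ ^ 3) (a * w₁ ^ 3)) := by
    have e1 : z₁ = X₁ * w₁ / α := by rw [hX₁]; field_simp
    have e2 : z₂ = X₂ * w₂ / α := by rw [hX₂]; field_simp
    rw [hTU, sgQh_eq, sgPh_eq, e2]
    nth_rewrite 1 [e1]
    ring
  rw [hid, norm_mul, norm_div, norm_mul]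
  have hrem := sg_rem_bound k X₁ h₁'
  have b1 : ‖(a * w₁ ^ 3) ^ k * (X₁ * sgQ k (X₁ ^ 3) - sgP k (X₁ ^ 3))‖ ≤
      S * (C₀ / M₁ ^ 3) ^ (2 * k + 1) := by
    rw [norm_mul, norm_pow]
    calc ‖a * w₁ ^ 3‖ ^ k * ‖X₁ * sgQ k (X₁ ^ 3) - sgP k (X₁ ^ 3)‖
        ≤ (B * M₁ ^ 3) ^ k * (20000 ^ (k + 1) * (C₀ / M₁ ^ 3) ^ (2 * k + 1)) := by
          gcongr
          exact hrem.trans (by gcongr)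
      _ = _ := by rw [hS]; ring
  have b2 : ‖(X₂ - 1) * sgPh k (b * z₁ ^ 3) (a * w₁ ^ 3)‖ ≤ S * (C₀ / M₂ ^ 3) := by
    rw [norm_mul, mul_comm S]; gcongr
  have b3 : (C₀ / M₁ ^ 3) ^ (2 * k + 1) ≤ C₀ ^ (6 * (k + 1)) * (M₁ ^ (3 * (2 * k + 1)))⁻¹ := by
    rw [div_pow, ← pow_mul, div_eq_mul_inv]
    gcongr
    omega
  have b4 : (C₀ / M₂ ^ 3) ≤ C₀ ^ (6 * (k + 1)) * (M₂ ^ 3)⁻¹ := by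
    rw [div_eq_mul_inv]
    gcongr
    exact le_self_pow₀ hC₀ (by omega)
  set Z := (M₁ ^ (3 * (2 * k + 1)))⁻¹ + (M₂ ^ 3)⁻¹ with hZ
  have hZp : 0 ≤ Z := by positivity
  calc ‖w₁‖ * ‖w₂‖ / ‖α‖ * ‖(a * w₁ ^ 3) ^ k * (X₁ * sgQ k (X₁ ^ 3) - sgP k (X₁ ^ 3)) -
        (X₂ - 1) * sgPh k (b * z₁ ^ 3) (a * w₁ ^ 3)‖
      ≤ M₁ * M₂ * A * (S * (C₀ ^ (6 * (k + 1)) * Z)) := by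
        rw [div_eq_mul_inv]
        gcongr
        refine (norm_sub_le _ _).trans ((add_le_add b1 b2).trans ?_)
        rw [← mul_add]
        gcongr
        rw [hZ, mul_add]
        exact add_le_add b3 b4
    _ = (M₁ * M₂ * S) * A * (C₀ ^ (6 * (k + 1)) * Z) := by ring
    _ = (1 * 20000 ^ (k + 1) * A * B ^ k * C₀ ^ (6 * (k + 1))) *
        (M₁ ^ (3 * k + 1) * M₂ * Z) := by rw [hMS]; ring
    _ ≤ _ := by
        rw [hCexp]
        gcongr
        linarith

end

section

open Finset NumberField

lemma sg_real {ι : Type*} [Fintype ι] (logc : ℝ) (hlogc : 0 ≤ logc) (m₁ m₂ : ι → ℝ)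
    (N : ℝ) (hN : N = 32 * Fintype.card ι + 1) (hm₁ : ∀ i, 0 ≤ m₁ i) (hm₂ : ∀ i, 0 ≤ m₂ i)
    (h₁ h₂ : ℝ) (hh₁ : h₁ = ∑ i, m₁ i)
    (hbig : 8 * logc + 4 * Fintype.card ι < h₁)
    (hbig0 : 0 < h₁) (hclose : ∀ i, |m₁ i / h₁ - m₂ i / h₂| ≤ 1 / N) (k : ℕ)
    (hk : 10 ≤ k) (hs₁ : h₂ ≤ (2 * k + 2) * h₁) (hs₂ : (2 * k - 2) * h₁ ≤ h₂) :
    (k + 1) * logc + ∑ i, ((3 * k + 1) * m₁ i + m₂ i +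
      Real.log ((Real.exp (m₁ i * (3 * (2 * k + 1))))⁻¹ + (Real.exp (m₂ i * 3))⁻¹)) < 0 := by
  have hk' : (10 : ℝ) ≤ k := by exact_mod_cast hk
  have hh₂p : 0 < h₂ := by nlinarith
  have hNp : 0 < N := by rw [hN]; positivity
  have hterm : ∀ i, ((3 * k + 1) * m₁ i + m₂ i +
      Real.log ((Real.exp (m₁ i * (3 * (2 * k + 1))))⁻¹ + (Real.exp (m₂ i * 3))⁻¹)) ≤
      1 + (-(k / 2 : ℝ)) * m₁ i + 2 * (h₂ / N) := by
    intro i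
    have hc := hclose i
    rw [abs_le] at hc
    have hA : m₂ i ≤ h₂ / h₁ * m₁ i + h₂ / N := by
      have h3 : m₂ i / h₂ ≤ m₁ i / h₁ + 1 / N := by linarith
      rw [div_le_iff₀ hh₂p] at h3
      calc m₂ i ≤ _ := h3
        _ = _ := by ring
    have hB : h₂ / h₁ * m₁ i - h₂ / N ≤ m₂ i := by
      have h3 : m₁ i / h₁ - 1 / N ≤ m₂ i / h₂ := by linarith
      rw [le_div_iff₀ hh₂p] at h3
      calc _ = (m₁ i / h₁ - 1 / N) * h₂ := by ring
        _ ≤ _ := h3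
    have hs₁' : h₂ / h₁ ≤ 2 * k + 2 := by rw [div_le_iff₀ hbig0]; exact hs₁
    have hs₂' : 2 * k - 2 ≤ h₂ / h₁ := by rw [le_div_iff₀ hbig0]; exact hs₂
    have hq : 0 ≤ h₂ / N := by positivity
    have hm := hm₁ i
    have u1 : h₂ / h₁ * m₁ i ≤ (2 * k + 2) * m₁ i := mul_le_mul_of_nonneg_right hs₁' hm
    have u2 : (2 * k - 2) * m₁ i ≤ h₂ / h₁ * m₁ i := mul_le_mul_of_nonneg_right hs₂' hm
    have hkm : 10 * m₁ i ≤ k * m₁ i := mul_le_mul_of_nonneg_right hk' hm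
    set V : ℝ := -(k / 2 : ℝ) * m₁ i + 2 * (h₂ / N) - ((3 * k + 1) * m₁ i + m₂ i) with hV
    have e1 : (Real.exp (m₁ i * (3 * (2 * k + 1))))⁻¹ ≤ Real.exp V := by
      rw [← Real.exp_neg, Real.exp_le_exp, hV]; nlinarith
    have e2 : (Real.exp (m₂ i * 3))⁻¹ ≤ Real.exp V := by
      rw [← Real.exp_neg, Real.exp_le_exp, hV]; nlinarith
    have e3 : Real.log ((Real.exp (m₁ i * (3 * (2 * k + 1))))⁻¹ + (Real.exp (m₂ i * 3))⁻¹) ≤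
        1 + V := by
      rw [Real.log_le_iff_le_exp (by positivity), Real.exp_add]
      have : (2 : ℝ) ≤ Real.exp 1 := by have := Real.add_one_le_exp (1 : ℝ); linarith
      calc _ ≤ Real.exp V + Real.exp V := add_le_add e1 e2
        _ = 2 * Real.exp V := by ring
        _ ≤ _ := by gcongr
    linarith
  have hsum := Finset.sum_le_sum (fun i (_ : i ∈ Finset.univ) => hterm i)
  have hev : ∑ i : ι, (1 + (-(k / 2 : ℝ)) * m₁ i + 2 * (h₂ / N)) =
      Fintype.card ι - k / 2 * h₁ + 2 * Fintype.card ι * (h₂ / N) := by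
    rw [Finset.sum_add_distrib, Finset.sum_add_distrib, ← Finset.mul_sum, ← hh₁]
    simp [Finset.card_univ]; ring
  rw [hev] at hsum
  have hd : (0 : ℝ) ≤ Fintype.card ι := by positivity
  have h5 : 2 * Fintype.card ι * (h₂ / N) ≤ k * h₁ / 4 := by
    rw [mul_div_assoc', div_le_iff₀ hNp, hN]
    have : h₂ ≤ 4 * k * h₁ := by nlinarith
    have hkh : 0 ≤ k * h₁ := by positivity
    nlinarith [mul_le_mul_of_nonneg_left this hd]
  have h6 : k * (8 * logc + 4 * Fintype.card ι) < k * h₁ := by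
    apply mul_lt_mul_of_pos_left hbig; linarith
  have h7 : (Fintype.card ι : ℝ) ≤ k * Fintype.card ι := by nlinarith
  have h8 : logc ≤ k * logc := by nlinarith
  linarith

lemma sg_norm_ge {K : Type*} [Field K] [NumberField K] (x : 𝓞 K) (hx : x ≠ 0) :
    1 ≤ ∏ σ : K →ₐ[ℚ] ℂ, ‖σ (x : K)‖ := by
  have h := congrArg norm (Algebra.norm_eq_prod_embeddings ℚ ℂ (x : K))
  rw [norm_prod] at h
  rw [← h, ← Algebra.coe_norm_int]
  have h2 : Algebra.norm ℤ x ≠ 0 := Algebra.norm_ne_zero_iff.2 hx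
  have h3 : (1 : ℝ) ≤ |((Algebra.norm ℤ x : ℤ) : ℝ)| := by
    exact_mod_cast Int.one_le_abs h2
  simpa using h3

/-- Local size of a pair. -/
noncomputable def sgM {K : Type*} [Field K] [NumberField K] (p : 𝓞 K × 𝓞 K) (σ : K →ₐ[ℚ] ℂ) : ℝ :=
  max 1 (max ‖σ (p.1 : K)‖ ‖σ (p.2 : K)‖)

lemma sgM_ge {K : Type*} [Field K] [NumberField K] (p : 𝓞 K × 𝓞 K) (σ : K →ₐ[ℚ] ℂ) :
    1 ≤ sgM p σ := le_max_left _ _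

/-- Logarithmic height of a pair. -/
noncomputable def sgH {K : Type*} [Field K] [NumberField K] (p : 𝓞 K × 𝓞 K) : ℝ :=
  ∑ σ : K →ₐ[ℚ] ℂ, Real.log (sgM p σ)

lemma sgH_finite {K : Type*} [Field K] [NumberField K] (B : ℝ) :
    {p : 𝓞 K × 𝓞 K | sgH p ≤ B}.Finite := by
  have hf : {x : 𝓞 K | ∀ φ : K →+* ℂ, ‖φ (x : K)‖ ≤ Real.exp B}.Finite := by
    have := Embeddings.finite_of_norm_le K ℂ (Real.exp B)
    refine Set.Finite.of_finite_image (f := fun x : 𝓞 K => (x : K)) (this.subset ?_)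
      (RingOfIntegers.coe_injective.injOn)
    rintro _ ⟨x, hx, rfl⟩
    exact ⟨x.2, hx⟩
  refine (hf.prod hf).subset ?_
  intro p hp
  have key : ∀ φ : K →+* ℂ, sgM p φ.toRatAlgHom ≤ Real.exp B := by
    intro φ
    have h1 : Real.log (sgM p φ.toRatAlgHom) ≤ sgH p :=
      Finset.single_le_sum (f := fun σ => Real.log (sgM p σ))
        (fun σ _ => Real.log_nonneg (sgM_ge p σ)) (Finset.mem_univ _)
    have h2 := sgM_ge p φ.toRatAlgHom
    rw [← Real.log_le_iff_le_exp (by linarith)]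
    exact h1.trans hp
  constructor <;> intro φ
  · exact ((le_max_left _ _).trans (le_max_right _ _)).trans (key φ)
  · exact ((le_max_right _ _).trans (le_max_right _ _)).trans (key φ)

/-- The auxiliary integer. -/
def sgDelta {A : Type*} [CommRing A] (a b : A) (p₁ p₂ : A × A) (k : ℕ) : A :=
  p₁.2 * p₂.1 * sgQh k (b * p₁.2 ^ 3) (a * p₁.1 ^ 3) -
    p₂.2 * p₁.1 * sgPh k (b * p₁.2 ^ 3) (a * p₁.1 ^ 3)

lemma sgDelta_ne {K : Type*} [Field K] [CharZero K] (a b : K) (p₁ p₂ : K × K) (k : ℕ)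
    (ha : a ≠ 0) (hw : p₁.1 ≠ 0) (hz : p₁.2 ≠ 0) (hw₂ : p₂.1 ≠ 0)
    (hc : a * p₁.1 ^ 3 - b * p₁.2 ^ 3 ≠ 0) (h0 : sgDelta a b p₁ p₂ k = 0)
    (h1 : sgDelta a b p₁ p₂ (k + 1) = 0) : False := by
  unfold sgDelta at h0 h1
  set U := a * p₁.1 ^ 3 with hU
  have hU0 : U ≠ 0 := mul_ne_zero ha (pow_ne_zero _ hw)
  set x := b * p₁.2 ^ 3 / U with hx
  have hT : b * p₁.2 ^ 3 = x * U := by rw [hx]; field_simp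
  have hx1 : x ≠ 1 := by
    intro h
    rw [hT, h] at hc
    simp at hc
  rw [hT, sgPh_eq, sgQh_eq] at h0 h1
  have h0' : U ^ k * (p₁.2 * p₂.1 * sgQ k x - p₂.2 * p₁.1 * sgP k x) = 0 := by
    rw [← h0]; ring
  have h1' : U ^ (k + 1) * (p₁.2 * p₂.1 * sgQ (k + 1) x - p₂.2 * p₁.1 * sgP (k + 1) x) = 0 := by
    rw [← h1]; ring
  have g0 := (mul_eq_zero.1 h0').resolve_left (pow_ne_zero _ hU0)
  have g1 := (mul_eq_zero.1 h1').resolve_left (pow_ne_zero _ hU0)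
  apply sg_det k x hx1
  apply mul_left_cancel₀ (mul_ne_zero hz hw₂)
  linear_combination sgP k x * g1 - sgP (k + 1) x * g0

end

section

open Finset NumberField

lemma sg_pair {K : Type*} [Field K] [NumberField K] (a b : 𝓞 K) (C : (K →ₐ[ℚ] ℂ) → ℝ)
    (hC : ∀ σ, 1 ≤ C σ) (p₁ p₂ : 𝓞 K × 𝓞 K)
    (hw : p₁.1 ≠ 0) (hz : p₁.2 ≠ 0) (hw₂ : p₂.1 ≠ 0) (ha : a ≠ 0)
    (hc : a * p₁.1 ^ 3 - b * p₁.2 ^ 3 ≠ 0)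
    (hloc : ∀ k σ, ‖σ ((sgDelta a b p₁ p₂ k : 𝓞 K) : K)‖ ≤ C σ ^ (k + 1) *
      (sgM p₁ σ ^ (3 * k + 1) * sgM p₂ σ *
        ((sgM p₁ σ ^ (3 * (2 * k + 1)))⁻¹ + (sgM p₂ σ ^ 3)⁻¹)))
    (N : ℝ) (hN : N = 32 * Fintype.card (K →ₐ[ℚ] ℂ) + 1)
    (hbig : 8 * (∑ σ, Real.log (C σ)) + 4 * Fintype.card (K →ₐ[ℚ] ℂ) < sgH p₁)
    (hpos : 0 < sgH p₁)
    (hclose : ∀ σ, |Real.log (sgM p₁ σ) / sgH p₁ - Real.log (sgM p₂ σ) / sgH p₂| ≤ 1 / N)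
    (hh : 22 * sgH p₁ ≤ sgH p₂) : False := by
  set k₀ := ⌊(sgH p₂ / sgH p₁) / 2⌋₊ with hk₀
  have hr : 22 ≤ sgH p₂ / sgH p₁ := by rw [le_div_iff₀ hpos]; exact hh
  have hk₀' : 10 ≤ k₀ := by
    rw [hk₀]; apply Nat.le_floor; push_cast; linarith
  have f1 : (k₀ : ℝ) ≤ (sgH p₂ / sgH p₁) / 2 := Nat.floor_le (by linarith)
  have f2 : (sgH p₂ / sgH p₁) / 2 < k₀ + 1 := Nat.lt_floor_add_one _
  have g1 : 2 * k₀ * sgH p₁ ≤ sgH p₂ := by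
    rw [← le_div_iff₀ hpos]; linarith
  have g2 : sgH p₂ ≤ (2 * k₀ + 2) * sgH p₁ := by
    rw [← div_le_iff₀ hpos]; linarith
  have hex : ∃ k : ℕ, 10 ≤ k ∧ sgH p₂ ≤ (2 * k + 2) * sgH p₁ ∧ (2 * k - 2) * sgH p₁ ≤ sgH p₂ ∧
      sgDelta a b p₁ p₂ k ≠ 0 := by
    by_contra hno
    push Not at hno
    have e0 := hno k₀ hk₀' g2 (by linarith)
    have e1 := hno (k₀ + 1) (by omega) (by push_cast; linarith) (by push_cast; linarith)
    have hm : ∀ k, sgDelta (a : K) (b : K) ((p₁.1 : K), (p₁.2 : K)) ((p₂.1 : K), (p₂.2 : K)) k =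
        ((sgDelta a b p₁ p₂ k : 𝓞 K) : K) := by
      intro k
      unfold sgDelta
      simp only [map_sub, map_mul, sgPh_map, sgQh_map, map_pow]
    have hinj : ∀ x : 𝓞 K, x ≠ 0 → (x : K) ≠ 0 := fun x hx => by
      simpa using hx
    refine sgDelta_ne (a : K) (b : K) ((p₁.1 : K), (p₁.2 : K)) ((p₂.1 : K), (p₂.2 : K)) k₀
      (hinj _ ha) (hinj _ hw) (hinj _ hz) (hinj _ hw₂) ?_ ?_ ?_
    · have := hinj _ hc
      simpa using this
    · rw [hm, e0]; simp
    · rw [hm, e1]; simp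
  obtain ⟨k, hk10, hs₁, hs₂, hne⟩ := hex
  have hM1 : ∀ σ, 0 < sgM p₁ σ := fun σ => lt_of_lt_of_le one_pos (sgM_ge _ _)
  have hM2 : ∀ σ, 0 < sgM p₂ σ := fun σ => lt_of_lt_of_le one_pos (sgM_ge _ _)
  have hCp : ∀ σ, 0 < C σ := fun σ => lt_of_lt_of_le one_pos (hC _)
  have h1 := sg_norm_ge _ hne
  have h2 : (1 : ℝ) ≤ ∏ σ, (C σ ^ (k + 1) *
      (sgM p₁ σ ^ (3 * k + 1) * sgM p₂ σ *
        ((sgM p₁ σ ^ (3 * (2 * k + 1)))⁻¹ + (sgM p₂ σ ^ 3)⁻¹))) :=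
    h1.trans (Finset.prod_le_prod (fun σ _ => norm_nonneg _) (fun σ _ => hloc k σ))
  have h3 := Real.log_nonneg h2
  have hp : ∀ σ, 0 < (sgM p₁ σ ^ (3 * (2 * k + 1)))⁻¹ + (sgM p₂ σ ^ 3)⁻¹ := by
    intro σ
    have := hM1 σ
    have := hM2 σ
    positivity
  have hreal := sg_real (∑ σ, Real.log (C σ)) (Finset.sum_nonneg fun σ _ => Real.log_nonneg (hC σ))
    (fun σ => Real.log (sgM p₁ σ)) (fun σ => Real.log (sgM p₂ σ)) N hN
    (fun σ => Real.log_nonneg (sgM_ge _ _)) (fun σ => Real.log_nonneg (sgM_ge _ _))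
    (sgH p₁) (sgH p₂) rfl hbig hpos hclose k hk10 hs₁ hs₂
  refine absurd h3 (not_le.2 (lt_of_eq_of_lt ?_ hreal))
  rw [Real.log_prod, Finset.mul_sum, ← Finset.sum_add_distrib]
  · refine Finset.sum_congr rfl fun σ _ => ?_
    have e1 : Real.exp (Real.log (sgM p₁ σ) * (3 * (2 * k + 1))) = sgM p₁ σ ^ (3 * (2 * k + 1)) := by
      have : ((3 : ℝ) * (2 * k + 1)) = ((3 * (2 * k + 1) : ℕ) : ℝ) := by push_cast; ring
      rw [this, ← Real.rpow_def_of_pos (hM1 σ), Real.rpow_natCast]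
    have e2 : Real.exp (Real.log (sgM p₂ σ) * 3) = sgM p₂ σ ^ 3 := by
      have : (3 : ℝ) = ((3 : ℕ) : ℝ) := by norm_num
      rw [this, ← Real.rpow_def_of_pos (hM2 σ), Real.rpow_natCast]
    rw [e1, e2, Real.log_mul (pow_ne_zero _ (hCp σ).ne')
      (mul_pos (mul_pos (pow_pos (hM1 σ) _) (hM2 σ)) (hp σ)).ne',
      Real.log_mul (mul_pos (pow_pos (hM1 σ) _) (hM2 σ)).ne' (hp σ).ne',
      Real.log_mul (pow_pos (hM1 σ) _).ne' (hM2 σ).ne', Real.log_pow, Real.log_pow]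
    push_cast
    ring
  · intro σ _
    exact (mul_pos (pow_pos (hCp σ) _) (mul_pos (mul_pos (pow_pos (hM1 σ) _) (hM2 σ)) (hp σ))).ne'

theorem sg_thue {K : Type*} [Field K] [NumberField K] (a b c : 𝓞 K) (ha : a ≠ 0) (hb : b ≠ 0)
    (hc : c ≠ 0) :
    {p : 𝓞 K × 𝓞 K | p.1 ≠ 0 ∧ p.2 ≠ 0 ∧ a * p.1 ^ 3 - b * p.2 ^ 3 = c}.Finite := by
  by_contra hinf
  set S := {p : 𝓞 K × 𝓞 K | p.1 ≠ 0 ∧ p.2 ≠ 0 ∧ a * p.1 ^ 3 - b * p.2 ^ 3 = c} with hS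
  have hσ : ∀ (σ : K →ₐ[ℚ] ℂ) (x : 𝓞 K), x ≠ 0 → σ (x : K) ≠ 0 := by
    intro σ x hx
    simpa using hx
  choose C₀ hC₀ hroot using fun σ : K →ₐ[ℚ] ℂ =>
    sg_root (σ (a : K)) (σ (b : K)) (σ (c : K)) (hσ σ a ha) (hσ σ b hb)
  choose C hC hlocal using fun σ : K →ₐ[ℚ] ℂ =>
    sg_local (σ (a : K)) (σ (b : K)) (hσ σ a ha) (hσ σ b hb) (C₀ σ) (hC₀ σ)
  have hroot' : ∀ (p : 𝓞 K × 𝓞 K) (σ : K →ₐ[ℚ] ℂ), ∃ α : ℂ, p ∈ S →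
      α ^ 3 = σ (b : K) / σ (a : K) ∧ (sgM p σ ≤ C₀ σ ∨ (σ (p.1 : K) ≠ 0 ∧
      ‖α * σ (p.2 : K) / σ (p.1 : K) - 1‖ ≤ C₀ σ / sgM p σ ^ 3 ∧
      ‖α * σ (p.2 : K) / σ (p.1 : K) - 1‖ ≤ 1)) := by
    intro p σ
    by_cases hp : p ∈ S
    · obtain ⟨α, h⟩ := hroot σ (σ (p.1 : K)) (σ (p.2 : K)) (sgM p σ) (by
        rw [← hp.2.2]; simp) rfl
      exact ⟨α, fun _ => h⟩
    · exact ⟨0, fun h => absurd h hp⟩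
  choose α hα using hroot'
  set N : ℝ := 32 * Fintype.card (K →ₐ[ℚ] ℂ) + 1 with hN
  have hNp : 0 < N := by rw [hN]; positivity
  have hle : ∀ p σ, Real.log (sgM p σ) ≤ sgH (K := K) p := fun p σ =>
    Finset.single_le_sum (f := fun σ => Real.log (sgM p σ))
        (fun σ _ => Real.log_nonneg (sgM_ge p σ)) (Finset.mem_univ _)
  have hHn : ∀ p, 0 ≤ sgH (K := K) p := fun p =>
    Finset.sum_nonneg fun σ _ => Real.log_nonneg (sgM_ge p σ)
  let F : 𝓞 K × 𝓞 K → ((K →ₐ[ℚ] ℂ) → ℂ × ℕ) := fun p σ =>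
    (α p σ, ⌊N * (Real.log (sgM p σ) / sgH p)⌋₊)
  have hfin : (Set.pi Set.univ (fun σ : K →ₐ[ℚ] ℂ =>
      ({x : ℂ | x ^ 3 = σ (b : K) / σ (a : K)} ×ˢ Set.Iic ⌊N⌋₊ : Set (ℂ × ℕ)))).Finite := by
    refine Set.Finite.pi (fun σ => Set.Finite.prod ?_ (Set.finite_Iic ⌊N⌋₊))
    have hne : (Polynomial.X ^ 3 - Polynomial.C (σ (b : K) / σ (a : K))) ≠ 0 :=
      Polynomial.X_pow_sub_C_ne_zero (by norm_num) _
    refine (Polynomial.finite_setOf_isRoot hne).subset ?_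
    intro x hx
    simp only [Set.mem_setOf_eq] at hx ⊢
    simp [Polynomial.IsRoot, hx]
  have hmaps : Set.MapsTo F S (Set.pi Set.univ (fun σ : K →ₐ[ℚ] ℂ =>
      ({x : ℂ | x ^ 3 = σ (b : K) / σ (a : K)} ×ˢ Set.Iic ⌊N⌋₊ : Set (ℂ × ℕ)))) := by
    intro p hp σ _
    refine ⟨(hα p σ hp).1, ?_⟩
    simp only [F, Set.mem_Iic]
    apply Nat.floor_le_floor
    have : Real.log (sgM p σ) / sgH p ≤ 1 := div_le_one_of_le₀ (hle p σ) (hHn p)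
    nlinarith
  obtain ⟨y, -, hy⟩ : ∃ y ∈ (Set.pi Set.univ (fun σ : K →ₐ[ℚ] ℂ =>
      ({x : ℂ | x ^ 3 = σ (b : K) / σ (a : K)} ×ˢ Set.Iic ⌊N⌋₊ : Set (ℂ × ℕ)))),
      (S ∩ F ⁻¹' {y}).Infinite := by
    by_contra hno
    push Not at hno
    apply hinf
    refine (hfin.biUnion (t := fun y => S ∩ F ⁻¹' {y}) fun y hy => ?_).subset ?_
    · exact hno y hy
    · intro p hp
      rw [Set.mem_iUnion₂]
      exact ⟨F p, hmaps hp, hp, rfl⟩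
  have hpick : ∀ B : ℝ, ∃ p ∈ S ∩ F ⁻¹' {y}, B < sgH p := by
    intro B
    by_contra hno
    push Not at hno
    exact hy ((sgH_finite B).subset hno)
  obtain ⟨p₁, ⟨hp₁, hF₁⟩, hB₁⟩ := hpick
    (max 0 (8 * (∑ σ, Real.log (C σ)) + 4 * Fintype.card (K →ₐ[ℚ] ℂ)))
  rw [max_lt_iff] at hB₁
  obtain ⟨p₂, ⟨hp₂, hF₂⟩, hB₂⟩ := hpick (22 * sgH p₁)
  have hFF : F p₁ = F p₂ := by
    rw [Set.mem_preimage, Set.mem_singleton_iff] at hF₁ hF₂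
    rw [hF₁, hF₂]
  have hFα : ∀ σ, α p₁ σ = α p₂ σ := fun σ => congrArg Prod.fst (congrFun hFF σ)
  have hFn : ∀ σ, ⌊N * (Real.log (sgM p₁ σ) / sgH p₁)⌋₊ = ⌊N * (Real.log (sgM p₂ σ) / sgH p₂)⌋₊ :=
    fun σ => congrArg Prod.snd (congrFun hFF σ)
  refine sg_pair a b C hC p₁ p₂ hp₁.1 hp₁.2.1 hp₂.1 ha (by rw [hp₁.2.2]; exact hc) ?_ N hN
    hB₁.2 hB₁.1 ?_ hB₂.le
  · intro k σ
    have h1 := hα p₁ σ hp₁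
    have h2 := hα p₂ σ hp₂
    rw [← hFα σ] at h2
    have h := hlocal σ k (α p₁ σ) (σ (p₁.1 : K)) (σ (p₁.2 : K)) (σ (p₂.1 : K)) (σ (p₂.2 : K))
      (sgM p₁ σ) (sgM p₂ σ) h1.1 rfl rfl h1.2 h2.2
    refine le_of_eq_of_le ?_ h
    congr 1
    have key : ∀ x : 𝓞 K, σ (x : K) = ((σ : K →+* ℂ).comp (algebraMap (𝓞 K) K)) x := fun x => rfl
    unfold sgDelta
    simp only [key]
    simp only [map_sub, map_mul, sgPh_map, sgQh_map, map_pow]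
  · intro σ
    have n1 : 0 ≤ N * (Real.log (sgM p₁ σ) / sgH p₁) :=
      mul_nonneg hNp.le (div_nonneg (Real.log_nonneg (sgM_ge _ _)) (hHn _))
    have n2 : 0 ≤ N * (Real.log (sgM p₂ σ) / sgH p₂) :=
      mul_nonneg hNp.le (div_nonneg (Real.log_nonneg (sgM_ge _ _)) (hHn _))
    have a1 := Nat.floor_le n1
    have a2 := Nat.lt_floor_add_one (N * (Real.log (sgM p₁ σ) / sgH p₁))
    have b1 := Nat.floor_le n2
    have b2 := Nat.lt_floor_add_one (N * (Real.log (sgM p₂ σ) / sgH p₂))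
    rw [hFn σ] at a1 a2
    rw [le_div_iff₀ hNp, ← abs_of_pos hNp, ← abs_mul, abs_le]
    constructor <;> linarith

end

section

open Finset NumberField

lemma sg_units (K : Type*) [Field K] [NumberField K] (n : ℕ) (hn : n ≠ 0) :
    ∃ T : Set (𝓞 K)ˣ, T.Finite ∧ ∀ u : (𝓞 K)ˣ, ∃ t ∈ T, ∃ v : (𝓞 K)ˣ, u = t * v ^ n := by
  let H : Subgroup (𝓞 K)ˣ := (powMonoidHom n : (𝓞 K)ˣ →* (𝓞 K)ˣ).range
  have hfg : Monoid.FG (𝓞 K)ˣ := inferInstance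
  have hfg2 : Group.FG ((𝓞 K)ˣ) := Group.fg_iff_monoid_fg.2 hfg
  have hfin : Finite ((𝓞 K)ˣ ⧸ H) := CommGroup.finite_of_fg_isMulTorsion _ (CommGroup.isMulTorsion_quotient_range_powMonoidHom _ hn)
  refine ⟨Set.range (Quotient.out : (𝓞 K)ˣ ⧸ H → (𝓞 K)ˣ), Set.finite_range _, fun u => ?_⟩
  refine ⟨_, ⟨(u : (𝓞 K)ˣ ⧸ H), rfl⟩, ?_⟩
  have h : ((Quotient.out (u : (𝓞 K)ˣ ⧸ H) : (𝓞 K)ˣ) : (𝓞 K)ˣ ⧸ H) = u := QuotientGroup.out_eq' _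
  rw [QuotientGroup.eq] at h
  obtain ⟨v, hv⟩ := h
  refine ⟨v, ?_⟩
  rw [powMonoidHom_apply] at hv
  rw [hv]; group

lemma sg_divisors {K : Type*} [Field K] [NumberField K] (D : 𝓞 K) (hD : D ≠ 0) (n : ℕ)
    (hn : n ≠ 0) : ∃ G : Set (𝓞 K), G.Finite ∧ (∀ g ∈ G, g ≠ 0) ∧ ∀ e, e ∣ D →
      ∃ g ∈ G, ∃ v : (𝓞 K)ˣ, e = g * (v : 𝓞 K) ^ n := by
  classical
  obtain ⟨T, hT, hTu⟩ := sg_units K n hn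
  have hI : {I : Ideal (𝓞 K) | I ∣ Ideal.span {D}}.Finite := by
    have hne : Ideal.span {D} ≠ (0 : Ideal (𝓞 K)) := by simpa using hD
    have := UniqueFactorizationMonoid.fintypeSubtypeDvd (Ideal.span {D}) hne
    exact Set.finite_coe_iff.1 (@Finite.of_fintype _ this)
  let gen : Ideal (𝓞 K) → 𝓞 K := fun I => if h : ∃ e, Ideal.span {e} = I then h.choose else 0
  have hgen : ∀ e : 𝓞 K, Ideal.span {gen (Ideal.span {e})} = Ideal.span {e} := by
    intro e
    have h : ∃ e', Ideal.span {e'} = Ideal.span {e} := ⟨e, rfl⟩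
    simp only [gen, dif_pos h]
    exact h.choose_spec
  refine ⟨(Set.image2 (fun I (t : (𝓞 K)ˣ) => gen I * (t : 𝓞 K)) {I | I ∣ Ideal.span {D}} T) \ {0},
    (hI.image2 _ hT).subset Set.sdiff_subset, fun g hg => hg.2, ?_⟩
  intro e he
  have he0 : e ≠ 0 := by rintro rfl; exact hD (zero_dvd_iff.1 he)
  obtain ⟨u, hu⟩ := (Ideal.span_singleton_eq_span_singleton.1 (hgen e))
  obtain ⟨t, ht, v, hv⟩ := hTu u
  have hee : e = gen (Ideal.span {e}) * t * (v : 𝓞 K) ^ n := by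
    conv_lhs => rw [← hu, hv]
    push_cast; ring
  refine ⟨gen (Ideal.span {e}) * t, ⟨⟨Ideal.span {e}, ?_, t, ht, rfl⟩, ?_⟩, v, hee⟩
  · exact Ideal.dvd_iff_le.2 (Ideal.span_singleton_le_span_singleton.2 he)
  · intro h0
    rw [Set.mem_singleton_iff] at h0
    rw [h0, zero_mul] at hee
    exact he0 hee

lemma sg_unit_eq {K : Type*} [Field K] [NumberField K] (D : 𝓞 K) (hD : D ≠ 0) :
    {r : K | ∃ e₁ e₂ e₃ : 𝓞 K, e₁ + e₂ = e₃ ∧ e₁ ∣ D ∧ e₂ ∣ D ∧ e₃ ∣ D ∧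
      r = (e₁ : K) / (e₃ : K)}.Finite := by
  obtain ⟨G, hG, hG0, hGd⟩ := sg_divisors D hD 3 (by norm_num)
  have hfin : (⋃ q ∈ G ×ˢ G ×ˢ G, (fun p : 𝓞 K × 𝓞 K => (q.1 : K) * (p.1 : K) ^ 3 / (q.2.2 : K)) ''
      {p : 𝓞 K × 𝓞 K | p.1 ≠ 0 ∧ p.2 ≠ 0 ∧ q.1 * p.1 ^ 3 - (-q.2.1) * p.2 ^ 3 = q.2.2}).Finite := by
    refine (hG.prod (hG.prod hG)).biUnion fun q hq => Set.Finite.image _ ?_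
    exact sg_thue _ _ _ (hG0 _ hq.1) (neg_ne_zero.2 (hG0 _ hq.2.1)) (hG0 _ hq.2.2)
  refine hfin.subset ?_
  rintro r ⟨e₁, e₂, e₃, hs, h1, h2, h3, rfl⟩
  obtain ⟨g₁, hg₁, v₁, rfl⟩ := hGd _ h1
  obtain ⟨g₂, hg₂, v₂, rfl⟩ := hGd _ h2
  obtain ⟨g₃, hg₃, v₃, rfl⟩ := hGd _ h3
  rw [Set.mem_iUnion₂]
  refine ⟨(g₁, g₂, g₃), ⟨hg₁, hg₂, hg₃⟩, (((v₁ * v₃⁻¹ : (𝓞 K)ˣ) : 𝓞 K), ((v₂ * v₃⁻¹ : (𝓞 K)ˣ) : 𝓞 K)),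
    ⟨(v₁ * v₃⁻¹).ne_zero, (v₂ * v₃⁻¹).ne_zero, ?_⟩, ?_⟩
  · have hv : (v₃ : 𝓞 K) * ((v₃⁻¹ : (𝓞 K)ˣ) : 𝓞 K) = 1 := by simp
    simp only
    push_cast
    have hv3 : (v₃ : 𝓞 K) ^ 3 * ((v₃⁻¹ : (𝓞 K)ˣ) : 𝓞 K) ^ 3 = 1 := by rw [← mul_pow, hv, one_pow]
    linear_combination ((v₃⁻¹ : (𝓞 K)ˣ) : 𝓞 K) ^ 3 * hs + g₃ * hv3
  · have hv : ((v₃ : 𝓞 K) : K) * (((v₃⁻¹ : (𝓞 K)ˣ) : 𝓞 K) : K) = 1 := by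
      rw [← map_mul]; simp
    have h0 : ((v₃ : 𝓞 K) : K) ≠ 0 := left_ne_zero_of_mul_eq_one hv
    have hi : (((v₃⁻¹ : (𝓞 K)ˣ) : 𝓞 K) : K) = ((v₃ : 𝓞 K) : K)⁻¹ := eq_inv_of_mul_eq_one_right hv
    have hg : (g₃ : K) ≠ 0 := by simpa using hG0 _ hg₃
    simp only [Units.val_mul, map_mul, map_pow, hi]
    field_simp

end

section

open Finset NumberField

lemma sg_final {L : Type*} [Field L] [NumberField L] (β₁ β₂ β₃ : 𝓞 L) (h12 : β₁ ≠ β₂)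
    (h13 : β₁ ≠ β₃) (h23 : β₂ ≠ β₃) :
    {X : 𝓞 L | ∃ η₁ η₂ η₃ : 𝓞 L, η₁ ^ 2 = X - β₁ ∧ η₂ ^ 2 = X - β₂ ∧ η₃ ^ 2 = X - β₃}.Finite := by
  set D : 𝓞 L := (β₂ - β₁) * (β₃ - β₂) * (β₃ - β₁) with hD
  have hD0 : D ≠ 0 := mul_ne_zero (mul_ne_zero (sub_ne_zero.2 h12.symm) (sub_ne_zero.2 h23.symm))
    (sub_ne_zero.2 h13.symm)
  have hR := sg_unit_eq D hD0
  refine Set.Finite.of_finite_image (f := fun x : 𝓞 L => (x : L)) (((hR.prod hR).image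
    (fun q : L × L => (β₁ : L) + ((β₂ : L) - (β₁ : L)) * (q.1 + q.2) ^ 2 / (4 * q.1 * q.2))).subset ?_)
    (RingOfIntegers.coe_injective.injOn)
  rintro _ ⟨X, ⟨η₁, η₂, η₃, e1, e2, e3⟩, rfl⟩
  have p12 : (η₁ - η₂) * (η₁ + η₂) = β₂ - β₁ := by linear_combination e1 - e2
  have p23 : (η₂ - η₃) * (η₂ + η₃) = β₃ - β₂ := by linear_combination e2 - e3
  have p13 : (η₁ - η₃) * (η₁ + η₃) = β₃ - β₁ := by linear_combination e1 - e3
  have dE : (η₁ - η₃) ∣ D := ⟨(η₁ + η₃) * ((β₂ - β₁) * (β₃ - β₂)), by rw [hD, ← p13]; ring⟩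
  refine ⟨(((η₁ - η₂ : 𝓞 L) : L) / ((η₁ - η₃ : 𝓞 L) : L), ((η₁ + η₂ : 𝓞 L) : L) / ((η₁ - η₃ : 𝓞 L) : L)),
    ⟨⟨η₁ - η₂, η₂ - η₃, η₁ - η₃, by ring, ?_, ?_, dE, rfl⟩,
      ⟨η₁ + η₂, -(η₂ + η₃), η₁ - η₃, by ring, ?_, ?_, dE, rfl⟩⟩, ?_⟩
  · exact ⟨(η₁ + η₂) * ((β₃ - β₁) * (β₃ - β₂)), by rw [hD, ← p12]; ring⟩
  · exact ⟨(η₂ + η₃) * ((β₃ - β₁) * (β₂ - β₁)), by rw [hD, ← p23]; ring⟩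
  · exact ⟨(η₁ - η₂) * ((β₃ - β₁) * (β₃ - β₂)), by rw [hD, ← p12]; ring⟩
  · exact ⟨-(η₂ - η₃) * ((β₃ - β₁) * (β₂ - β₁)), by rw [hD, ← p23]; ring⟩
  · have hinj : ∀ x : 𝓞 L, x ≠ 0 → (x : L) ≠ 0 := fun x hx => by simpa using hx
    have q12 : (η₁ - η₂) * (η₁ + η₂) ≠ 0 := by rw [p12]; exact sub_ne_zero.2 h12.symm
    have q13 : (η₁ - η₃) * (η₁ + η₃) ≠ 0 := by rw [p13]; exact sub_ne_zero.2 h13.symm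
    have nA := hinj _ (left_ne_zero_of_mul q12)
    have nB := hinj _ (right_ne_zero_of_mul q12)
    have nE := hinj _ (left_ne_zero_of_mul q13)
    have r12 := congrArg (fun x : 𝓞 L => (x : L)) p12
    have r1 := congrArg (fun x : 𝓞 L => (x : L)) e1
    simp only [map_mul, map_sub, map_add, map_pow] at *
    rw [← r12]
    field_simp
    linear_combination 4 * r1

lemma sg_ideal {R : Type*} [CommRing R] [IsDedekindDomain R] [DecidableEq (Ideal R)]
    (Z W C Y E : Ideal R) (hZ : Z ≠ 0) (hW : W ≠ 0)
    (hC : C ≠ 0) (hY : Y ≠ 0) (hE : E ≠ 0) (h : Z * W = C * Y ^ 2)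
    (hcop : ∀ P, P ∣ Z → P ∣ W → P ∣ E) :
    ∃ s ∈ (UniqueFactorizationMonoid.normalizedFactors (C * E)).toFinset.powerset,
      ∃ I : Ideal R, Z = (∏ P ∈ s, P) * I ^ 2 := by
  classical
  open UniqueFactorizationMonoid in
  set m := normalizedFactors Z with hm
  have hprod : Z = ∏ P ∈ m.toFinset, P ^ m.count P := by
    rw [← Finset.prod_multiset_count, hm]
    exact (associated_iff_eq.1 (prod_normalizedFactors hZ)).symm
  refine ⟨m.toFinset.filter (fun P => m.count P % 2 = 1), ?_, ∏ P ∈ m.toFinset, P ^ (m.count P / 2), ?_⟩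
  · rw [Finset.mem_powerset]
    intro P hP
    rw [Finset.mem_filter, Multiset.mem_toFinset] at hP
    obtain ⟨hPm, hodd⟩ := hP
    have hPp := prime_of_normalized_factor P hPm
    have hcount := congrArg (fun I => (normalizedFactors I).count P) h
    rw [normalizedFactors_mul hZ hW, normalizedFactors_mul hC (pow_ne_zero _ hY),
      normalizedFactors_pow, Multiset.count_add, Multiset.count_add, Multiset.count_nsmul] at hcount
    rw [Multiset.mem_toFinset, normalizedFactors_mul hC hE, Multiset.mem_add]
    by_cases hPC : P ∈ normalizedFactors C
    · exact Or.inl hPC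
    · right
      rw [Multiset.count_eq_zero_of_notMem hPC] at hcount
      have hPW : P ∈ normalizedFactors W := by
        by_contra hPW
        rw [Multiset.count_eq_zero_of_notMem hPW, ← hm] at hcount
        omega
      have := hcop P (dvd_of_mem_normalizedFactors hPm) (dvd_of_mem_normalizedFactors hPW)
      obtain ⟨q, hq, hPq⟩ := exists_mem_normalizedFactors_of_dvd hE hPp.irreducible this
      rw [associated_iff_eq] at hPq
      rwa [hPq]
  · rw [Finset.prod_filter, ← Finset.prod_pow, ← Finset.prod_mul_distrib]
    nth_rewrite 1 [hprod]
    refine Finset.prod_congr rfl fun P _ => ?_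
    rw [← pow_mul]
    split_ifs with h1
    · rw [← pow_succ']; congr 1; omega
    · rw [one_mul]; congr 1; omega

lemma sg_kummer {K : Type*} [Field K] [NumberField K] (c Δ : 𝓞 K) (hc : c ≠ 0) (hΔ : Δ ≠ 0) :
    ∃ T : Set (𝓞 K), T.Finite ∧ ∀ z w y : 𝓞 K, z ≠ 0 → w ≠ 0 → z * w = c * y ^ 2 → z ∣ w - Δ →
      ∃ κ ∈ T, ∃ δ : K, (z : K) = (κ : K) * δ ^ 2 := by
  classical
  obtain ⟨T, hT, hTu⟩ := sg_units K 2 (by norm_num)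
  have hspan : ∀ x : 𝓞 K, x ≠ 0 → Ideal.span {x} ≠ (0 : Ideal (𝓞 K)) := fun x hx => by
    simpa using hx
  set F := (UniqueFactorizationMonoid.normalizedFactors
    (Ideal.span {c} * Ideal.span {Δ} : Ideal (𝓞 K))).toFinset.powerset with hF
  choose rep hrep using fun g : ClassGroup (𝓞 K) => ClassGroup.mk0_surjective g
  let Good : Finset (Ideal (𝓞 K)) × ClassGroup (𝓞 K) → 𝓞 K × 𝓞 K → Prop := fun q p =>
    p.1 ≠ 0 ∧ p.2 ≠ 0 ∧ Ideal.span {p.1} * (rep q.2 : Ideal (𝓞 K)) ^ 2 =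
      (∏ P ∈ q.1, P) * Ideal.span {p.2} ^ 2
  let pick : Finset (Ideal (𝓞 K)) × ClassGroup (𝓞 K) → 𝓞 K × 𝓞 K := fun q =>
    if h : ∃ p, Good q p then h.choose else 0
  have hpick : ∀ q p, Good q p → Good q (pick q) := by
    intro q p hp
    have h : ∃ p, Good q p := ⟨p, hp⟩
    simp only [pick, dif_pos h]
    exact h.choose_spec
  refine ⟨Set.image2 (fun q (t : (𝓞 K)ˣ) => (t : 𝓞 K) * (pick q).1)
    ((F : Set (Finset (Ideal (𝓞 K)))) ×ˢ (Set.univ : Set (ClassGroup (𝓞 K)))) T,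
    (F.finite_toSet.prod Set.finite_univ).image2 _ hT, ?_⟩
  intro z w y hz hw heq hdvd
  have hy : y ≠ 0 := by
    rintro rfl
    simp at heq
    tauto
  obtain ⟨s, hs, I, hI⟩ := sg_ideal (Ideal.span {z}) (Ideal.span {w}) (Ideal.span {c})
    (Ideal.span {y}) (Ideal.span {Δ}) (hspan z hz) (hspan w hw) (hspan c hc) (hspan y hy) (hspan Δ hΔ)
    (by rw [Ideal.span_singleton_pow, Ideal.span_singleton_mul_span_singleton,
      Ideal.span_singleton_mul_span_singleton, heq]) (by
      intro P hPz hPw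
      rw [Ideal.dvd_span_singleton] at *
      obtain ⟨r, hr⟩ := hdvd
      have : Δ = w - z * r := by rw [← hr]; ring
      rw [this]
      exact P.sub_mem hPw (P.mul_mem_right _ hPz))
  have hI0 : I ≠ 0 := by
    rintro rfl
    apply hspan z hz
    rw [hI]; simp
  let g : ClassGroup (𝓞 K) := (ClassGroup.mk0 ⟨I, mem_nonZeroDivisors_of_ne_zero hI0⟩)⁻¹
  have hg : ClassGroup.mk0 (⟨I, mem_nonZeroDivisors_of_ne_zero hI0⟩ * rep g) = 1 := by
    rw [map_mul, hrep]
    simp [g]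
  have hR0 : (rep g : Ideal (𝓞 K)) ≠ 0 :=
    nonZeroDivisors.ne_zero (rep g).2
  rw [ClassGroup.mk0_eq_one_iff] at hg
  obtain ⟨δ, hδ⟩ := hg.principal
  have hδ' : I * (rep g : Ideal (𝓞 K)) = Ideal.span {δ} := hδ
  have hδ0 : δ ≠ 0 := by
    rintro rfl
    have : I * (rep g : Ideal (𝓞 K)) = 0 := by rw [hδ']; simp
    rcases mul_eq_zero.1 this with h | h
    · exact hI0 h
    · exact hR0 h
  have hgood : Good (s, g) (z, δ) := by
    refine ⟨hz, hδ0, ?_⟩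
    simp only
    rw [hI, ← hδ']; ring
  obtain ⟨hz0, hδ00, hgood0⟩ := hpick _ _ hgood
  have hgood1 := hgood.2.2
  simp only at hgood1
  set z₀ := (pick (s, g)).1 with hz₀
  set δ₀ := (pick (s, g)).2 with hδ₀
  have hassoc : Ideal.span {z₀ * δ ^ 2} = Ideal.span {z * δ₀ ^ 2} := by
    apply mul_right_cancel₀ (pow_ne_zero 2 hR0)
    rw [← Ideal.span_singleton_mul_span_singleton, ← Ideal.span_singleton_mul_span_singleton,
      ← Ideal.span_singleton_pow, ← Ideal.span_singleton_pow]
    rw [mul_right_comm, hgood0, mul_right_comm (Ideal.span {z}), hgood1, mul_right_comm]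
  obtain ⟨u, hu⟩ := Ideal.span_singleton_eq_span_singleton.1 hassoc
  obtain ⟨t, ht, v, hv⟩ := hTu u
  refine ⟨(t : 𝓞 K) * z₀, ⟨(s, g), ⟨hs, Set.mem_univ _⟩, t, ht, rfl⟩,
    ((v : 𝓞 K) : K) * (δ : K) / (δ₀ : K), ?_⟩
  have hd : (δ₀ : K) ≠ 0 := by simpa using hδ00
  rw [hv] at hu
  have hu' := congrArg (fun x : 𝓞 K => (x : K)) hu
  simp only [map_mul, map_pow, Units.val_mul, Units.val_pow_eq_pow_val] at hu' ⊢
  field_simp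
  linear_combination -hu'

end

section

open Finset NumberField

lemma sg_ext {K : Type*} [Field K] [NumberField K] (T : Finset K) :
    ∃ (g : Polynomial K), ∀ κ ∈ T, ∃ s : g.SplittingField, s ^ 2 = algebraMap K _ κ := by
  refine ⟨∏ κ ∈ T, (Polynomial.X ^ 2 - Polynomial.C κ), fun κ hκ => ?_⟩
  set g := ∏ κ ∈ T, (Polynomial.X ^ 2 - Polynomial.C κ) with hg
  have hne : ∀ κ : K, (Polynomial.X ^ 2 - Polynomial.C κ) ≠ 0 := fun κ =>
    Polynomial.X_pow_sub_C_ne_zero (by norm_num) _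
  have hg0 : g ≠ 0 := Finset.prod_ne_zero_iff.2 fun κ _ => hne κ
  have hs := Polynomial.SplittingField.splits g
  have h1 : ((Polynomial.X ^ 2 - Polynomial.C κ).map (algebraMap K g.SplittingField)).Splits := by
    refine Polynomial.Splits.of_dvd hs (by simpa [Polynomial.map_eq_zero] using hg0) ?_
    exact Polynomial.map_dvd _ (Finset.dvd_prod_of_mem _ hκ)
  obtain ⟨s, hs⟩ := h1.exists_eval_eq_zero (by
    rw [Polynomial.degree_map, Polynomial.degree_X_pow_sub_C (by norm_num)]; norm_num)
  refine ⟨s, ?_⟩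
  simpa [sub_eq_zero] using hs

lemma sg_core {K : Type*} [Field K] [NumberField K] (s : Finset (𝓞 K)) (hs : 2 < s.card) (c : 𝓞 K)
    (hc : c ≠ 0) : {X : 𝓞 K | ∃ y, ∏ β ∈ s, (X - β) = c * y ^ 2}.Finite := by
  classical
  have hΔ : ∀ β, ∏ γ ∈ s.erase β, (β - γ) ≠ 0 := fun β =>
    Finset.prod_ne_zero_iff.2 fun γ hγ => sub_ne_zero.2 (Finset.ne_of_mem_erase hγ).symm
  choose T hT hTk using fun β : 𝓞 K => sg_kummer c _ hc (hΔ β)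
  obtain ⟨β₁, m1, β₂, m2, β₃, m3, h12, h13, h23⟩ := Finset.two_lt_card.1 hs
  have hTT : (⋃ β ∈ s, (fun x : 𝓞 K => (x : K)) '' T β).Finite :=
    s.finite_toSet.biUnion fun β _ => (hT β).image _
  obtain ⟨g, hg⟩ := sg_ext hTT.toFinset
  let L := g.SplittingField
  have : CharZero L := charZero_of_injective_algebraMap (algebraMap K L).injective
  have : NumberField L := NumberField.of_module_finite K L
  have hsq : ∀ X : 𝓞 K, X ∉ s → (∃ y, ∏ β ∈ s, (X - β) = c * y ^ 2) → ∀ β ∈ s,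
      ∃ η : 𝓞 L, η ^ 2 = algebraMap (𝓞 K) (𝓞 L) X - algebraMap (𝓞 K) (𝓞 L) β := by
    intro X hX ⟨y, hy⟩ β hβ
    have hne : ∀ γ ∈ s, X - γ ≠ 0 := fun γ hγ h0 => hX (by rw [sub_eq_zero.1 h0]; exact hγ)
    obtain ⟨κ, hκ, δ, hδ⟩ := hTk β (X - β) (∏ γ ∈ s.erase β, (X - γ)) y (hne β hβ)
      (Finset.prod_ne_zero_iff.2 fun γ hγ => hne γ (Finset.mem_of_mem_erase hγ))
      (by rw [Finset.mul_prod_erase s (fun γ => X - γ) hβ]; exact hy)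
      (by
        have := Polynomial.sub_dvd_eval_sub X β (∏ γ ∈ s.erase β, (Polynomial.X - Polynomial.C γ))
        simpa [Polynomial.eval_prod] using this)
    obtain ⟨r, hr⟩ := hg (κ : K) (by
      rw [Set.Finite.mem_toFinset, Set.mem_iUnion₂]
      exact ⟨β, hβ, κ, hκ, rfl⟩)
    have hη : (r * algebraMap K L δ) ^ 2 =
        ((algebraMap (𝓞 K) (𝓞 L) X - algebraMap (𝓞 K) (𝓞 L) β : 𝓞 L) : L) := by
      rw [mul_pow, hr, ← map_pow, ← map_mul, ← hδ, ← map_sub]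
      rfl
    have hIntg : IsIntegral ℤ (r * algebraMap K L δ) := by
      refine IsIntegral.of_pow (n := 2) (by norm_num) ?_
      rw [hη]
      exact RingOfIntegers.isIntegral_coe _
    refine ⟨⟨_, hIntg⟩, ?_⟩
    exact RingOfIntegers.coe_injective hη
  have hinj : Function.Injective (algebraMap (𝓞 K) (𝓞 L)) :=
    RingOfIntegers.algebraMap.injective K L
  have hfin := sg_final (algebraMap (𝓞 K) (𝓞 L) β₁) (algebraMap (𝓞 K) (𝓞 L) β₂)
    (algebraMap (𝓞 K) (𝓞 L) β₃) (hinj.ne h12) (hinj.ne h13) (hinj.ne h23)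
  have hfin2 : {X : 𝓞 K | X ∉ s ∧ ∃ y, ∏ β ∈ s, (X - β) = c * y ^ 2}.Finite := by
    refine Set.Finite.of_finite_image (f := algebraMap (𝓞 K) (𝓞 L)) (hfin.subset ?_) hinj.injOn
    rintro _ ⟨X, ⟨hX, hy⟩, rfl⟩
    obtain ⟨η₁, e1⟩ := hsq X hX hy β₁ m1
    obtain ⟨η₂, e2⟩ := hsq X hX hy β₂ m2
    obtain ⟨η₃, e3⟩ := hsq X hX hy β₃ m3
    exact ⟨η₁, η₂, η₃, e1, e2, e3⟩
  refine (s.finite_toSet.union hfin2).subset ?_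
  intro X hX
  by_cases h : X ∈ s
  · exact Or.inl h
  · exact Or.inr ⟨h, hX⟩

end

section

open Finset NumberField

lemma sg_squarefree_map (f : Polynomial ℤ) (hf : Squarefree f) :
    Squarefree (f.map (algebraMap ℤ ℚ)) := by
  intro q hq
  have hf0 : f ≠ 0 := hf.ne_zero
  have hfm : f.map (algebraMap ℤ ℚ) ≠ 0 := by
    rw [Ne, Polynomial.map_eq_zero_iff (algebraMap ℤ ℚ).injective_int]; exact hf0
  have hq0 : q ≠ 0 := by
    rintro rfl
    apply hfm
    simpa using hq
  obtain ⟨b, hb⟩ := IsLocalization.integerNormalization_map_to_map (nonZeroDivisors ℤ) q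
  set n := IsLocalization.integerNormalization (nonZeroDivisors ℤ) q with hn
  have hb0 : ((b : ℤ) : ℚ) ≠ 0 := by
    exact_mod_cast nonZeroDivisors.ne_zero b.2
  have hbq : n.map (algebraMap ℤ ℚ) = Polynomial.C ((b : ℤ) : ℚ) * q := by
    rw [hb]
    ext i
    rw [Polynomial.coeff_C_mul, Polynomial.coeff_smul, zsmul_eq_mul]
  have hdvd : n.primPart.map (algebraMap ℤ ℚ) ∣ q := by
    have h1 : n.primPart.map (algebraMap ℤ ℚ) ∣ Polynomial.C ((b : ℤ) : ℚ) * q := by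
      rw [← hbq]
      exact Polynomial.map_dvd _ n.primPart_dvd
    refine h1.trans ⟨Polynomial.C ((b : ℤ) : ℚ)⁻¹, ?_⟩
    have : Polynomial.C ((b : ℤ) : ℚ) * Polynomial.C ((b : ℤ) : ℚ)⁻¹ = 1 := by
      rw [← Polynomial.C_mul, mul_inv_cancel₀ hb0, Polynomial.C_1]
    linear_combination -q * this
  have hpr : (n.primPart * n.primPart).IsPrimitive := n.isPrimitive_primPart.mul n.isPrimitive_primPart
  have h2 : n.primPart * n.primPart ∣ f := by
    apply hpr.dvd_of_fraction_map_dvd_fraction_map (K := ℚ)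
    rw [Polynomial.map_mul]
    exact (mul_dvd_mul hdvd hdvd).trans hq
  have h3 := hf _ h2
  have h4 : q.natDegree = 0 := by
    have e1 : (n.map (algebraMap ℤ ℚ)).natDegree = q.natDegree := by
      rw [hbq, Polynomial.natDegree_C_mul hb0]
    rw [← e1, Polynomial.natDegree_map_eq_of_injective (algebraMap ℤ ℚ).injective_int,
      ← Polynomial.natDegree_primPart]
    exact Polynomial.natDegree_eq_zero_of_isUnit h3
  rw [Polynomial.isUnit_iff_degree_eq_zero, Polynomial.degree_eq_natDegree hq0, h4]
  rfl

lemma sg_x_finite_aux (f : Polynomial ℤ) (hf : Squarefree f) (hdeg : 3 ≤ f.natDegree)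
    (K : Type) [Field K] [NumberField K] (hspl : (f.map (algebraMap ℤ K)).Splits)
    (hsepK : (f.map (algebraMap ℤ K)).Separable) :
    {x : ℤ | ∃ y : ℤ, y ^ 2 = f.eval x}.Finite := by
  classical
  set fK := f.map (algebraMap ℤ K) with hfK
  have hnd : fK.roots.Nodup := Polynomial.nodup_roots hsepK
  have hinjK : Function.Injective (algebraMap ℤ K) := (algebraMap ℤ K).injective_int
  have hlead : fK.leadingCoeff = (f.leadingCoeff : K) := by
    rw [hfK, Polynomial.leadingCoeff_map_of_injective hinjK]; simp
  have hnat : fK.natDegree = f.natDegree := Polynomial.natDegree_map_eq_of_injective hinjK f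
  set a := f.leadingCoeff with ha
  have ha0 : a ≠ 0 := Polynomial.leadingCoeff_ne_zero.2 hf.ne_zero
  have haK : (a : K) ≠ 0 := by exact_mod_cast ha0
  have haO : (a : 𝓞 K) ≠ 0 := by exact_mod_cast ha0
  set rts := fK.roots.toFinset with hrts
  have hcard : rts.card = f.natDegree := by
    rw [hrts, Multiset.toFinset_card_of_nodup hnd, ← hnat]
    exact hspl.natDegree_eq_card_roots.symm
  have hIntg : ∀ α ∈ rts, ∃ β : 𝓞 K, (β : K) = (a : K) * α := by
    intro α hα
    rw [hrts, Multiset.mem_toFinset, Polynomial.mem_roots'] at hα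
    have hroot : Polynomial.aeval α f = 0 := by
      have := hα.2
      rwa [Polynomial.IsRoot, hfK, Polynomial.eval_map_algebraMap] at this
    have := isIntegral_leadingCoeff_smul f α hroot
    rw [zsmul_eq_mul] at this
    exact ⟨⟨_, this⟩, rfl⟩
  choose! B hB using hIntg
  have hBinj : Set.InjOn B (rts : Set K) := by
    intro x hx y hy hxy
    have := congrArg (fun z : 𝓞 K => (z : K)) hxy
    simp only [hB x hx, hB y hy] at this
    exact mul_left_cancel₀ haK this
  have hscard : 2 < (rts.image B).card := by
    rw [Finset.card_image_of_injOn hBinj, hcard]; omega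
  have hprod : ∀ x y : ℤ, y ^ 2 = f.eval x → ∏ β ∈ rts.image B, ((a * x : ℤ) - β : 𝓞 K) =
      (a : 𝓞 K) ^ (f.natDegree - 1) * (y : 𝓞 K) ^ 2 := by
    intro x y hxy
    apply RingOfIntegers.coe_injective
    have heval : fK.eval (x : K) = (y : K) ^ 2 := by
      have : ((f.eval x : ℤ) : K) = fK.eval (x : K) := by
        rw [hfK, ← eq_intCast (algebraMap ℤ K), ← eq_intCast (algebraMap ℤ K),
          Polynomial.eval_map_apply]
      rw [← this, ← hxy]; push_cast; rfl
    rw [hspl.eq_prod_roots, hlead] at heval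
    rw [Finset.prod_image hBinj]
    simp only [map_prod, map_mul, map_pow, map_sub, map_intCast]
    rw [← heval]
    have e1 : ∏ α ∈ rts, (((a * x : ℤ) : K) - (B α : K)) = ∏ α ∈ rts, ((a : K) * ((x : K) - α)) := by
      refine Finset.prod_congr rfl fun α hα => ?_
      rw [hB α hα]; push_cast; ring
    rw [e1, Finset.prod_mul_distrib, Finset.prod_const, hcard]
    have e2 : Polynomial.eval (x : K) (Polynomial.C (a : K) *
        (Multiset.map (fun a => Polynomial.X - Polynomial.C a) fK.roots).prod) =
        (a : K) * ∏ α ∈ rts, ((x : K) - α) := by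
      rw [Polynomial.eval_mul, Polynomial.eval_C, Polynomial.eval_multiset_prod, Multiset.map_map,
        hrts, Finset.prod_multiset_map_count]
      congr 1
      refine Finset.prod_congr rfl fun α hα => ?_
      rw [Multiset.count_eq_one_of_mem hnd (Multiset.mem_toFinset.1 hα), pow_one]
      simp
    rw [e2, ← mul_assoc, ← pow_succ]
    congr 2
    omega
  have hfin := sg_core (rts.image B) hscard ((a : 𝓞 K) ^ (f.natDegree - 1)) (pow_ne_zero _ haO)
  refine Set.Finite.of_finite_image (f := fun x : ℤ => ((a * x : ℤ) : 𝓞 K)) (hfin.subset ?_) ?_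
  · rintro _ ⟨x, ⟨y, hy⟩, rfl⟩
    exact ⟨(y : 𝓞 K), hprod x y hy⟩
  · intro x _ y _ hxy
    have hxy' : ((a * x : ℤ) : 𝓞 K) = ((a * y : ℤ) : 𝓞 K) := hxy
    have : a * x = a * y := by exact_mod_cast hxy'
    exact mul_left_cancel₀ ha0 this

lemma sg_x_finite_aux2 (f : Polynomial ℤ) (hf : Squarefree f) (hdeg : 3 ≤ f.natDegree)
    (K : Type) [Field K] [NumberField K] (ψ : ℚ →+* K)
    (hspl : ((f.map (algebraMap ℤ ℚ)).map ψ).Splits) :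
    {x : ℤ | ∃ y : ℤ, y ^ 2 = f.eval x}.Finite := by
  have hsep : ((f.map (algebraMap ℤ ℚ)).map ψ).Separable :=
    (PerfectField.separable_iff_squarefree.2 (sg_squarefree_map f hf)).map
  rw [Polynomial.map_map, RingHom.ext_int (ψ.comp (algebraMap ℤ ℚ)) (algebraMap ℤ K)] at hspl hsep
  exact sg_x_finite_aux f hf hdeg K hspl hsep

lemma sg_x_finite (f : Polynomial ℤ) (hf : Squarefree f) (hdeg : 3 ≤ f.natDegree) :
    {x : ℤ | ∃ y : ℤ, y ^ 2 = f.eval x}.Finite := by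
  let fQ := f.map (algebraMap ℤ ℚ)
  let K := fQ.SplittingField
  have : CharZero K := charZero_of_injective_algebraMap (algebraMap ℚ K).injective
  have : NumberField K := NumberField.of_module_finite ℚ K
  exact sg_x_finite_aux2 f hf hdeg K (algebraMap ℚ K) (Polynomial.SplittingField.splits fQ)

end

theorem siegel_hyperelliptic (f : Polynomial ℤ) (hf : Squarefree f) (hdeg : 3 ≤ f.natDegree) :
    {p : ℤ × ℤ | p.2 ^ 2 = f.eval p.1}.Finite := by
  have hx := sg_x_finite f hf hdeg
  refine (hx.biUnion (t := fun x => {x} ×ˢ Set.Icc (-|f.eval x|) |f.eval x|) fun x _ =>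
    (Set.finite_singleton x).prod (Set.finite_Icc _ _)).subset ?_
  rintro ⟨x, y⟩ h
  have h' : y ^ 2 = f.eval x := h
  rw [Set.mem_iUnion₂]
  refine ⟨x, ⟨y, h'⟩, rfl, ?_⟩
  have : |y| ≤ |f.eval x| := by
    rw [← h', abs_pow]
    exact Int.le_self_sq _
  exact abs_le.1 this
end
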